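/- arXiv:0902.3419 — 4 statements merged into one kernel-verified Lean document; each statement's English description precedes it below -/
import Mathlib

section
/- Under the stated assumptions including non-periodicity, for every fixed integer k ≥ 0, Σ_{1≤n≤N} a(n)(log n)^k ∼ (μ/ρ) N^{ρ} (log N)^k ∼ A(N)(log N)^k as N → ∞. -/
open scoped BigOperators ENNReal
open Filter Asymptotics

noncomputable section

/-- `af P m n` is the number of ordered `m`-tuples `(n₁,…,n_m)` of elements of `P`
with product `n` (so `af P 0 n = 1` iff `n = 1`). -/
def af (P : Set ℕ) (m n : ℕ) : ℕ :=
  Nat.card {t : Fin m → ℕ // (∀ i, t i ∈ P) ∧ ∏ i, t i = n}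

/-- `aTot P n = a(n) = Σ_{m ≥ 0} a_m(n)`. -/
def aTot (P : Set ℕ) (n : ℕ) : ℝ := ∑' m : ℕ, (af P m n : ℝ)

/-- `Acum P N = A(N) = Σ_{1 ≤ n ≤ N} a(n)`. -/
def Acum (P : Set ℕ) (N : ℕ) : ℝ := ∑ n ∈ Finset.Icc 1 N, aTot P n

/-- The Dirichlet series `𝒫(x) = Σ_{n ∈ 𝒫} n^{-x}` at a real point. -/
def Pval (P : Set ℕ) (x : ℝ) : ℝ := ∑' n : P, ((n : ℕ) : ℝ) ^ (-x)

/-- `𝒫'(x) = -Σ_{n ∈ 𝒫} n^{-x} log n`. -/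
def Pderiv1 (P : Set ℕ) (x : ℝ) : ℝ := -∑' n : P, ((n : ℕ) : ℝ) ^ (-x) * Real.log (n : ℕ)

/-- `𝒫''(x) = Σ_{n ∈ 𝒫} n^{-x} (log n)^2`. -/
def Pderiv2 (P : Set ℕ) (x : ℝ) : ℝ := ∑' n : P, ((n : ℕ) : ℝ) ^ (-x) * (Real.log (n : ℕ)) ^ 2

/-- The abscissa of convergence `κ` of the Dirichlet series of `P`, as an extended real
(`⊥` when `P` is finite). -/
def kappa (P : Set ℕ) : EReal :=
  sInf {x : EReal | ∃ r : ℝ, x = (r : EReal) ∧ Summable (fun n : P => ((n : ℕ) : ℝ) ^ (-r))}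

open Classical in
/-- The (possibly infinite) value `𝒫(x) ∈ (0,∞]` of the Dirichlet series at an
extended-real point; at `x = -∞` every term `n^{-x}` is infinite. -/
def PvalE (P : Set ℕ) (x : EReal) : ℝ≥0∞ :=
  if x = ⊥ then ⊤ else ∑' n : P, ENNReal.ofReal (((n : ℕ) : ℝ) ^ (-x.toReal))

open Topology in
theorem uf_lim (f : Ultrafilter ℝ) (g : ℝ → ℝ) (a b : ℝ) (h : ∀ᶠ t in (f : Filter ℝ), a ≤ g t ∧ g t ≤ b) :
    ∃ x, Tendsto g f (𝓝 x) := by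
  have := (isCompact_Icc (a := a) (b := b)).ultrafilter_le_nhds' (f.map g) (by
    rw [Ultrafilter.mem_map]; exact h)
  obtain ⟨x, -, hx⟩ := this
  exact ⟨x, hx⟩

/-- ultrafilter limit bookkeeping -/
theorem dense_of_small (S : AddSubmonoid ℝ) (ε : ℝ) (a b : ℝ) (ha : a ∈ S) (hb : b ∈ S)
    (hb0 : 0 < b) (hab : b < a) (hε : a - b ≤ ε) :
    ∃ T, ∀ s ≥ T, ∃ s' ∈ S, s ≤ s' ∧ s' ≤ s + ε := by
  set g := a - b with hg
  have hg0 : 0 < g := by linarith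
  refine ⟨⌈b / g⌉₊ * b, fun s hs => ?_⟩
  set m := ⌊s / b⌋₊ with hm
  have hs0 : 0 ≤ s := le_trans (by positivity) hs
  have hm1 : (m : ℝ) * b ≤ s := by
    have := Nat.floor_le (show 0 ≤ s / b by positivity)
    rwa [le_div_iff₀ hb0] at this
  have hm2 : s < (m + 1) * b := by
    have := Nat.lt_floor_add_one (s / b)
    rwa [div_lt_iff₀ hb0] at this
  have hm3 : ⌈b / g⌉₊ ≤ m := by
    apply Nat.le_floor
    rwa [le_div_iff₀ hb0]
  set j := ⌈(s - m * b) / g⌉₊ with hj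
  have hj1 : j ≤ m := by
    refine le_trans (Nat.ceil_mono ?_) hm3
    gcongr
    linarith
  have hj2 : s - m * b ≤ j * g := by
    have := Nat.le_ceil ((s - m * b) / g)
    rwa [div_le_iff₀ hg0] at this
  have hj3 : j * g < s - m * b + g := by
    have := Nat.ceil_lt_add_one (show 0 ≤ (s - m * b) / g from div_nonneg (by linarith) hg0.le)
    rw [← hj] at this
    have h2 := mul_lt_mul_of_pos_right this hg0
    rwa [add_mul, div_mul_cancel₀ _ hg0.ne', one_mul] at h2
  refine ⟨(m - j) • b + j • a, S.add_mem (S.nsmul_mem hb _) (S.nsmul_mem ha _), ?_, ?_⟩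
  · simp only [nsmul_eq_mul]
    push_cast [hj1]
    nlinarith
  · simp only [nsmul_eq_mul]
    push_cast [hj1]
    nlinarith

theorem grp_diff (s : Set ℝ) (x : ℝ) (hx : x ∈ AddSubgroup.closure s) :
    ∃ a ∈ AddSubmonoid.closure s, ∃ b ∈ AddSubmonoid.closure s, x = a - b := by
  induction hx using AddSubgroup.closure_induction with
  | mem x hx => exact ⟨x, AddSubmonoid.subset_closure hx, 0, zero_mem _, by simp⟩
  | zero => exact ⟨0, zero_mem _, 0, zero_mem _, by simp⟩
  | add x y _ _ hx hy =>
    obtain ⟨a, ha, b, hb, rfl⟩ := hx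
    obtain ⟨c, hc, d, hd, rfl⟩ := hy
    exact ⟨a + c, add_mem ha hc, b + d, add_mem hb hd, by ring⟩
  | neg x _ hx =>
    obtain ⟨a, ha, b, hb, rfl⟩ := hx
    exact ⟨b, hb, a, ha, by ring⟩

theorem grp_rat (P : Set ℕ) (hP : ∀ n ∈ P, 2 ≤ n) (x : ℝ)
    (hx : x ∈ AddSubgroup.closure ((fun n : ℕ => Real.log n) '' P)) :
    ∃ q : ℚ, Real.exp x = q := by
  induction hx using AddSubgroup.closure_induction with
  | mem x hx =>
    obtain ⟨n, hn, rfl⟩ := hx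
    have : (0:ℝ) < n := by have := hP n hn; positivity
    exact ⟨n, by simp [Real.exp_log this]⟩
  | zero => exact ⟨1, by simp⟩
  | add x y _ _ hx hy =>
    obtain ⟨a, ha⟩ := hx
    obtain ⟨b, hb⟩ := hy
    exact ⟨a * b, by simp [Real.exp_add, ha, hb]⟩
  | neg x _ hx =>
    obtain ⟨a, ha⟩ := hx
    exact ⟨a⁻¹, by simp [Real.exp_neg, ha]⟩

theorem semigroup_dense (P : Set ℕ) (hP : ∀ n ∈ P, 2 ≤ n) (hP2 : P.Nontrivial)
    (hnp : ∀ d : ℕ, 2 ≤ d → ¬ P ⊆ {n : ℕ | ∃ k : ℕ, 1 ≤ k ∧ n = d ^ k}) (ε : ℝ) (hε : 0 < ε) :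
    ∃ T : ℝ, ∀ s ≥ T, ∃ s' ∈ AddSubmonoid.closure ((fun n : ℕ => Real.log n) '' P),
      s ≤ s' ∧ s' ≤ s + ε := by
  obtain ⟨p, hp⟩ := hP2.nonempty
  have hlogpos : ∀ n ∈ P, 0 < Real.log n := fun n hn =>
    Real.log_pos (by have := hP n hn; exact_mod_cast this)
  rcases AddSubgroup.dense_or_cyclic (AddSubgroup.closure ((fun n : ℕ => Real.log n) '' P)) with h | ⟨a, h⟩
  · obtain ⟨g, hg, hgε⟩ := h.exists_between hε
    obtain ⟨a, ha, b, hb, rfl⟩ := grp_diff _ _ hg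
    have hl := AddSubmonoid.subset_closure (s := (fun n : ℕ => Real.log n) '' P) ⟨p, hp, rfl⟩
    have hb0 : 0 ≤ b := by
      have : AddSubmonoid.closure ((fun n : ℕ => Real.log n) '' P) ≤ AddSubmonoid.nonneg ℝ := by
        rw [AddSubmonoid.closure_le]
        rintro _ ⟨n, hn, rfl⟩
        exact (hlogpos n hn).le
      exact this hb
    refine dense_of_small _ ε _ _ (add_mem ha hl) (add_mem hb hl) ?_ ?_ ?_
    · have := hlogpos p hp
      simp only; linarith
    · linarith [hgε.1]
    · linarith [hgε.2]
  · exfalso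
    rw [← AddSubgroup.zmultiples_eq_closure] at h
    -- make the generator positive
    have : ∃ a : ℝ, 0 ≤ a ∧ AddSubgroup.closure ((fun n : ℕ => Real.log n) '' P) = AddSubgroup.zmultiples a := by
      rcases le_total 0 a with h0 | h0
      · exact ⟨a, h0, h⟩
      · exact ⟨-a, by linarith, by rw [h, AddSubgroup.zmultiples_neg]⟩
    obtain ⟨a, ha, h⟩ := this
    obtain ⟨q, hq⟩ := grp_rat P hP a (h ▸ AddSubgroup.mem_zmultiples a)
    have key : ∀ n ∈ P, ∃ k : ℕ, 1 ≤ k ∧ 0 < a ∧ q ^ k = n := by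
      intro n hn
      have h1 : Real.log n ∈ AddSubgroup.zmultiples a := h ▸ AddSubgroup.subset_closure ⟨n, hn, rfl⟩
      obtain ⟨k, hk⟩ := AddSubgroup.mem_zmultiples_iff.1 h1
      have h2 := hlogpos n hn
      rw [← hk, zsmul_eq_mul] at h2
      have ha' : 0 < a := lt_of_le_of_ne ha (by rintro rfl; simp at h2)
      have hk0 : 0 < k := by
        have := pos_of_mul_pos_left h2 ha
        exact_mod_cast this
      lift k to ℕ using hk0.le
      refine ⟨k, by omega, ha', ?_⟩
      have h3 : Real.exp (k * a) = n := by
        have : (0:ℝ) < n := by have := hP n hn; positivity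
        rw [← Real.exp_log this, ← hk]; simp
      rw [Real.exp_nat_mul, hq] at h3
      exact_mod_cast h3
    obtain ⟨k, hk1, ha0, hk⟩ := key p hp
    have hden : q.den = 1 := by
      have : (q ^ k).den = 1 := by rw [hk]; simp
      rw [Rat.den_pow] at this
      exact (Nat.pow_eq_one.1 this).resolve_right (by omega)
    have hq1 : 1 < q := by
      have : (1:ℝ) < q := by rw [← hq]; exact Real.one_lt_exp_iff.2 ha0
      exact_mod_cast this
    have hqn : q = (q.num.toNat : ℚ) := by
      have h1 : (q.num : ℚ) = q := Rat.den_eq_one_iff q |>.1 hden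
      have h2 : 0 ≤ q.num := Rat.num_nonneg.2 (by linarith)
      have h3 : (q.num.toNat : ℤ) = q.num := Int.toNat_of_nonneg h2
      rw [← Int.cast_natCast, h3, h1]
    refine hnp q.num.toNat ?_ ?_
    · rw [hqn] at hq1
      exact_mod_cast hq1
    · intro n hn
      obtain ⟨k, hk1, -, hk⟩ := key n hn
      refine ⟨k, hk1, ?_⟩
      rw [hqn] at hk
      exact_mod_cast hk.symm

section renewal
open Topology

theorem Z_int (ρ : ℝ) (Z : ℝ → ℝ)
    (hZm : ∀ t h, 0 ≤ h → Real.exp (-ρ * h) * Z t ≤ Z (t + h)) (a b : ℝ) :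
    IntervalIntegrable Z MeasureTheory.volume a b := by
  have hmono : Monotone (fun t => Real.exp (ρ * t) * Z t) := by
    intro s t hst
    have := hZm s (t - s) (by linarith)
    have h2 := mul_le_mul_of_nonneg_left this (Real.exp_pos (ρ * t)).le
    rw [← mul_assoc, ← Real.exp_add] at h2
    convert h2 using 3 <;> ring_nf
  have h1 : IntervalIntegrable (fun t => Real.exp (ρ * t) * Z t) MeasureTheory.volume a b :=
    hmono.intervalIntegrable
  have h2 := h1.continuousOn_mul (g := fun t => Real.exp (-ρ * t)) (by fun_prop)
  refine h2.congr ?_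
  intro t _
  simp only [← mul_assoc, ← Real.exp_add]
  simp

theorem I_lower (ρ : ℝ) (hρ : 0 < ρ) (Z : ℝ → ℝ) (hZn : ∀ t, 0 ≤ Z t)
    (hZm : ∀ t h, 0 ≤ h → Real.exp (-ρ * h) * Z t ≤ Z (t + h)) (t h : ℝ) (hh : 0 ≤ h) :
    h * (Real.exp (-ρ * h) * Z (t - h)) ≤ ∫ u in (t - h)..t, Z u := by
  have := intervalIntegral.integral_mono_on (μ := MeasureTheory.volume) (a := t - h) (b := t)
    (f := fun _ => Real.exp (-ρ * h) * Z (t - h)) (g := Z) (by linarith) (by simp)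
    (Z_int ρ Z hZm _ _) (by
      intro u hu
      have h1 := hZm (t - h) (u - (t - h)) (by linarith [hu.1])
      rw [add_sub_cancel] at h1
      refine le_trans ?_ h1
      refine mul_le_mul_of_nonneg_right ?_ (hZn _)
      apply Real.exp_le_exp.2
      nlinarith [hu.2])
  rw [intervalIntegral.integral_const, sub_sub_cancel, smul_eq_mul] at this
  exact this

theorem I_upper (ρ : ℝ) (hρ : 0 < ρ) (Z : ℝ → ℝ) (hZn : ∀ t, 0 ≤ Z t)
    (hZm : ∀ t h, 0 ≤ h → Real.exp (-ρ * h) * Z t ≤ Z (t + h)) (t h : ℝ) (hh : 0 ≤ h) :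
    ∫ u in (t - h)..t, Z u ≤ h * (Real.exp (ρ * h) * Z t) := by
  have := intervalIntegral.integral_mono_on (μ := MeasureTheory.volume) (a := t - h) (b := t)
    (g := fun _ => Real.exp (ρ * h) * Z t) (f := Z) (by linarith) 
    (Z_int ρ Z hZm _ _) (by simp) (by
      intro u hu
      have h1 := hZm u (t - u) (by linarith [hu.2])
      rw [add_sub_cancel] at h1
      have h2 := mul_le_mul_of_nonneg_left h1 (Real.exp_pos (ρ * h)).le
      refine le_trans ?_ h2
      rw [← mul_assoc, ← Real.exp_add]
      refine le_mul_of_one_le_left (hZn _) ?_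
      apply Real.one_le_exp
      nlinarith [hu.1])
  rw [intervalIntegral.integral_const, sub_sub_cancel, smul_eq_mul] at this
  exact this

theorem I_le (ρ : ℝ) (Z : ℝ → ℝ) (C : ℝ) (hC : ∀ t, Z t ≤ C)
    (hZm : ∀ t h, 0 ≤ h → Real.exp (-ρ * h) * Z t ≤ Z (t + h)) (t h : ℝ) (hh : 0 ≤ h) :
    ∫ u in (t - h)..t, Z u ≤ h * C := by
  have := intervalIntegral.integral_mono_on (μ := MeasureTheory.volume) (a := t - h) (b := t)
    (g := fun _ => C) (f := Z) (by linarith) 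
    (Z_int ρ Z hZm _ _) (by simp) (fun u _ => hC u)
  simpa using this

theorem I_nonneg (Z : ℝ → ℝ) (hZn : ∀ t, 0 ≤ Z t) (t h : ℝ) (hh : 0 ≤ h) :
    0 ≤ ∫ u in (t - h)..t, Z u :=
  intervalIntegral.integral_nonneg (by linarith) (fun u _ => hZn u)

theorem I_zero (Z : ℝ → ℝ) (hZ0 : ∀ t < 0, Z t = 0) (a : ℝ) (ha : a ≤ 0) :
    ∫ u in a..0, Z u = 0 := by
  rw [intervalIntegral.integral_of_le ha, MeasureTheory.integral_Ioc_eq_integral_Ioo]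
  apply MeasureTheory.setIntegral_eq_zero_of_forall_eq_zero
  intro x hx
  exact hZ0 x hx.2

theorem I_zero' (Z : ℝ → ℝ) (hZ0 : ∀ t < 0, Z t = 0) (a : ℝ) (ha : a ≤ 0) :
    ∫ u in 0..a, Z u = 0 := by
  rw [intervalIntegral.integral_symm, I_zero Z hZ0 a ha, neg_zero]

/-- integrated renewal equation -/
theorem I_renewal {ι : Type*} (w ℓ : ι → ℝ) (ρ c : ℝ) (hρ : 0 < ρ)
    (hc : 0 < c) (hℓ : ∀ i, c ≤ ℓ i) (hw1 : HasSum w 1)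
    (hfin : ∀ t, {i | ℓ i ≤ t}.Finite) (Z : ℝ → ℝ) (hZ0 : ∀ t < 0, Z t = 0)
    (hZm : ∀ t h, 0 ≤ h → Real.exp (-ρ * h) * Z t ≤ Z (t + h))
    (hren : ∀ t, 0 ≤ t → Z t = Real.exp (-ρ * t) + ∑' i, w i * Z (t - ℓ i)) (t : ℝ) (ht : 0 ≤ t) :
    HasSum (fun i => w i * ∫ u in (t - ℓ i)..t, Z u) ((1 - Real.exp (-ρ * t)) / ρ) := by
  have hint := Z_int ρ Z hZm
  have h1 : ∫ u in 0..t, Z u = ∫ u in 0..t, (Real.exp (-ρ * u) + 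
      ∑ i ∈ (hfin t).toFinset, w i * Z (u - ℓ i)) := by
    apply intervalIntegral.integral_congr
    intro u hu
    rw [Set.uIcc_of_le ht] at hu
    simp only
    rw [hren u hu.1]
    congr 1
    apply tsum_eq_sum
    intro i hi
    have : t < ℓ i := by simpa using hi
    rw [hZ0 _ (by linarith [hu.2]), mul_zero]
  have hshift : ∀ i, IntervalIntegrable (fun u => Z (u - ℓ i)) MeasureTheory.volume 0 t := by
    intro i
    have := (hint (0 - ℓ i) (t - ℓ i)).comp_sub_right (ℓ i)
    simpa using this
  have h2 : ∀ i, ∫ u in 0..t, Z (u - ℓ i) = ∫ u in 0..(t - ℓ i), Z u := by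
    intro i
    rw [intervalIntegral.integral_comp_sub_right,
      ← intervalIntegral.integral_add_adjacent_intervals (hint _ 0) (hint 0 _),
      I_zero Z hZ0 _ (by linarith [hℓ i]), zero_add]
  have h3 : ∫ u in 0..t, Real.exp (-ρ * u) = (1 - Real.exp (-ρ * t)) / ρ := by
    rw [intervalIntegral.integral_comp_mul_left (fun x => Real.exp x) (by linarith : -ρ ≠ 0).symm.symm, integral_exp]
    simp
    field_simp
    ring
  rw [intervalIntegral.integral_add (Continuous.intervalIntegrable (by fun_prop) _ _)
    (by
      have := IntervalIntegrable.sum (hfin t).toFinset (f := fun i u => w i * Z (u - ℓ i))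
        (fun i _ => (hshift i).const_mul _)
      have e : (fun u => ∑ i ∈ (hfin t).toFinset, w i * Z (u - ℓ i)) =
          ∑ i ∈ (hfin t).toFinset, (fun u => w i * Z (u - ℓ i)) := by
        funext u
        simp
      rw [e]
      exact this), h3, intervalIntegral.integral_finsetSum
        (fun i _ => (hshift i).const_mul _)] at h1
  simp only [intervalIntegral.integral_const_mul, h2] at h1
  have h4 : HasSum (fun i => w i * ∫ u in 0..(t - ℓ i), Z u)
      (∑ i ∈ (hfin t).toFinset, w i * ∫ u in 0..(t - ℓ i), Z u) := by
    apply hasSum_sum_of_ne_finset_zero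
    intro i hi
    have : t < ℓ i := by simpa using hi
    rw [I_zero' Z hZ0 _ (by linarith), mul_zero]
  have h5 := (hw1.mul_right (∫ u in 0..t, Z u)).sub h4
  have e1 : (fun i => w i * ∫ u in (t - ℓ i)..t, Z u) =
      fun i => (w i * ∫ u in 0..t, Z u) - w i * ∫ u in 0..(t - ℓ i), Z u := by
    funext i
    rw [← intervalIntegral.integral_interval_sub_left (hint 0 t) (hint 0 _)]
    ring
  have e2 : (1 - Real.exp (-ρ * t)) / ρ = (1 * ∫ u in 0..t, Z u) -
      ∑ i ∈ (hfin t).toFinset, w i * ∫ u in 0..(t - ℓ i), Z u := by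
    rw [one_mul, h1]; ring
  rw [e1, e2]
  exact h5

theorem K_bounds_aux (f : Ultrafilter ℝ) (ρ C : ℝ) (hρ : 0 < ρ) (Z ζ : ℝ → ℝ)
    (hZn : ∀ t, 0 ≤ Z t) (hC : ∀ t, Z t ≤ C)
    (hZm : ∀ t h, 0 ≤ h → Real.exp (-ρ * h) * Z t ≤ Z (t + h))
    (hζ : ∀ s, Tendsto (fun t => Z (t - s)) f (𝓝 (ζ s))) (T a b : ℝ)
    (ha : ∀ s ≥ T, a ≤ ζ s) (hb : ∀ s ≥ T, ζ s ≤ b) (δ : ℝ) (hδ : 0 ≤ δ) (n : ℕ) :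
    ∀ s ≥ T, ∀ K, Tendsto (fun t => ∫ u in (t - s - n * δ)..(t - s), Z u) f (𝓝 K) →
      n * δ * (Real.exp (-ρ * δ) * a) ≤ K ∧ K ≤ n * δ * (Real.exp (ρ * δ) * b) := by
  induction n with
  | zero =>
    intro s hs K hK
    simp at hK
    rw [← hK]
    simp
  | succ n ih =>
    intro s hs K hK
    obtain ⟨K1, hK1⟩ := uf_lim f (fun t => ∫ u in (t - s - δ)..(t - s), Z u) 0 (δ * C)
      (Eventually.of_forall fun t => ⟨I_nonneg Z hZn _ _ hδ, I_le ρ Z C hC hZm _ _ hδ⟩)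
    have h2 := hK.sub hK1
    have h3 := ih (s + δ) (by linarith) (K - K1) (by
      refine h2.congr fun t => ?_
      rw [← intervalIntegral.integral_add_adjacent_intervals (Z_int ρ Z hZm _ (t - s - δ))
        (Z_int ρ Z hZm _ _), add_sub_cancel_right]
      congr 1
      · push_cast; ring
      · ring)
    have h4 : δ * (Real.exp (-ρ * δ) * ζ (s + δ)) ≤ K1 := by
      refine le_of_tendsto_of_tendsto' (((hζ (s + δ)).const_mul _).const_mul _) hK1 fun t => ?_
      have := I_lower ρ hρ Z hZn hZm (t - s) δ hδ
      rwa [← sub_sub]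
    have h5 : K1 ≤ δ * (Real.exp (ρ * δ) * ζ s) := by
      refine le_of_tendsto_of_tendsto' hK1 (((hζ s).const_mul _).const_mul _) fun t => ?_
      exact I_upper ρ hρ Z hZn hZm (t - s) δ hδ
    have h6 : δ * (Real.exp (-ρ * δ) * a) ≤ δ * (Real.exp (-ρ * δ) * ζ (s + δ)) := by
      gcongr
      exact ha _ (by linarith)
    have h7 : δ * (Real.exp (ρ * δ) * ζ s) ≤ δ * (Real.exp (ρ * δ) * b) := by
      gcongr
      exact hb _ (by linarith)
    push_cast
    constructor
    · linarith [h3.1]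
    · linarith [h3.2]

theorem K_bounds (f : Ultrafilter ℝ) (ρ C : ℝ) (hρ : 0 < ρ) (Z ζ : ℝ → ℝ)
    (hZn : ∀ t, 0 ≤ Z t) (hC : ∀ t, Z t ≤ C)
    (hZm : ∀ t h, 0 ≤ h → Real.exp (-ρ * h) * Z t ≤ Z (t + h))
    (hζ : ∀ s, Tendsto (fun t => Z (t - s)) f (𝓝 (ζ s))) (T a b : ℝ)
    (ha : ∀ s ≥ T, a ≤ ζ s) (hb : ∀ s ≥ T, ζ s ≤ b) (h : ℝ) (hh : 0 ≤ h)
    (s : ℝ) (hs : s ≥ T) (K : ℝ)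
    (hK : Tendsto (fun t => ∫ u in (t - s - h)..(t - s), Z u) f (𝓝 K)) :
    h * a ≤ K ∧ K ≤ h * b := by
  have key : ∀ n : ℕ, 1 ≤ n → h * (Real.exp (-ρ * (h / n)) * a) ≤ K ∧
      K ≤ h * (Real.exp (ρ * (h / n)) * b) := by
    intro n hn
    have hn0 : (n : ℝ) ≠ 0 := by positivity
    have e : (n : ℝ) * (h / n) = h := by field_simp
    have := K_bounds_aux f ρ C hρ Z ζ hZn hC hZm hζ T a b ha hb (h / n) (by positivity) n s hs K
      (by rwa [e])
    rwa [e] at this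
  have hlim : ∀ r : ℝ, Tendsto (fun n : ℕ => Real.exp (r * (h / n))) atTop (𝓝 1) := by
    intro r
    have h1 : Tendsto (fun n : ℕ => r * (h / (n : ℝ))) atTop (𝓝 (r * 0)) :=
      (tendsto_const_div_atTop_nhds_zero_nat h).const_mul r
    have := (Real.continuous_exp.tendsto _).comp h1
    simpa [Function.comp_def] using this
  constructor
  · refine le_of_tendsto (f := fun n : ℕ => h * (Real.exp (-ρ * (h / n)) * a)) (x := atTop) ?_ ?_
    · simpa using ((hlim (-ρ)).mul_const a).const_mul h
    · filter_upwards [eventually_ge_atTop 1] with n hn using (key n hn).1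
  · refine ge_of_tendsto (f := fun n : ℕ => h * (Real.exp (ρ * (h / n)) * b)) (x := atTop) ?_ ?_
    · simpa using ((hlim ρ).mul_const b).const_mul h
    · filter_upwards [eventually_ge_atTop 1] with n hn using (key n hn).2

/-- conserved quantity identifies the constant -/
theorem const_ident {ι : Type*} (w ℓ : ι → ℝ) (ρ c : ℝ) (hρ : 0 < ρ)
    (hc : 0 < c) (hw : ∀ i, 0 < w i) (hℓ : ∀ i, c ≤ ℓ i) (hw1 : HasSum w 1)
    (hm : Summable fun i => w i * ℓ i)
    (hfin : ∀ t, {i | ℓ i ≤ t}.Finite) (Z : ℝ → ℝ) (hZ0 : ∀ t < 0, Z t = 0)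
    (hZn : ∀ t, 0 ≤ Z t) (C : ℝ) (hC : ∀ t, Z t ≤ C)
    (hZm : ∀ t h, 0 ≤ h → Real.exp (-ρ * h) * Z t ≤ Z (t + h))
    (hren : ∀ t, 0 ≤ t → Z t = Real.exp (-ρ * t) + ∑' i, w i * Z (t - ℓ i))
    (f : Ultrafilter ℝ) (hf : (f : Filter ℝ) ≤ atTop) (ζ : ℝ → ℝ)
    (hζ : ∀ s, Tendsto (fun t => Z (t - s)) f (𝓝 (ζ s))) (c0 : ℝ)
    (hc0 : Tendsto ζ atTop (𝓝 c0)) : c0 * ∑' i, w i * ℓ i = 1 / ρ := by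
  have hℓ0 : ∀ i, 0 ≤ ℓ i := fun i => hc.le.trans (hℓ i)
  have hex : ∀ i s, ∃ K, Tendsto (fun t => ∫ u in (t - s - ℓ i)..(t - s), Z u) f (𝓝 K) :=
    fun i s => uf_lim f _ 0 (ℓ i * C) (Eventually.of_forall fun t =>
      ⟨I_nonneg Z hZn _ _ (hℓ0 i), I_le ρ Z C hC hZm _ _ (hℓ0 i)⟩)
  choose K hK using hex
  have hKb : ∀ i s, 0 ≤ K i s ∧ K i s ≤ ℓ i * C := fun i s =>
    ⟨ge_of_tendsto' (hK i s) fun t => I_nonneg Z hZn _ _ (hℓ0 i),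
     le_of_tendsto' (hK i s) fun t => I_le ρ Z C hC hZm _ _ (hℓ0 i)⟩
  have hbound : Summable fun i => w i * (ℓ i * C) := by
    simpa [mul_assoc] using hm.mul_right C
  have h1 : ∀ s, ∑' i, w i * K i s = 1 / ρ := by
    intro s
    have hA : Tendsto (fun t => ∑' i, w i * ∫ u in (t - s - ℓ i)..(t - s), Z u) f
        (𝓝 (∑' i, w i * K i s)) := by
      refine tendsto_tsum_of_dominated_convergence hbound (fun i => (hK i s).const_mul _) ?_
      refine Eventually.of_forall fun t i => ?_
      rw [Real.norm_of_nonneg (mul_nonneg (hw i).le (I_nonneg Z hZn _ _ (hℓ0 i)))]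
      exact mul_le_mul_of_nonneg_left (I_le ρ Z C hC hZm _ _ (hℓ0 i)) (hw i).le
    have hB : Tendsto (fun t => (1 - Real.exp (-ρ * (t - s))) / ρ) f (𝓝 ((1 - 0) / ρ)) := by
      refine Tendsto.mono_left ?_ hf
      refine (Tendsto.const_sub _ (Real.tendsto_exp_atBot.comp ?_)).div_const _
      exact (tendsto_atTop_add_const_right _ (-s) tendsto_id).const_mul_atTop_of_neg (by linarith)
    rw [sub_zero] at hB
    refine tendsto_nhds_unique (hA.congr' ?_) hB
    filter_upwards [hf (eventually_ge_atTop s)] with t ht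
    exact (I_renewal w ℓ ρ c hρ hc hℓ hw1 hfin Z hZ0 hZm hren (t - s) (by linarith)).tsum_eq
  have h2 : ∀ i, Tendsto (K i) atTop (𝓝 (ℓ i * c0)) := by
    intro i
    rw [Metric.tendsto_atTop] at hc0 ⊢
    intro ε hε
    have hli : 0 < ℓ i := hc.trans_le (hℓ i)
    obtain ⟨T, hT⟩ := hc0 (ε / (2 * ℓ i)) (by positivity)
    refine ⟨T, fun s hs => ?_⟩
    have h3 : ∀ s ≥ T, c0 - ε / (2 * ℓ i) ≤ ζ s ∧ ζ s ≤ c0 + ε / (2 * ℓ i) := by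
      intro s hs
      have := hT s hs
      rw [Real.dist_eq, abs_lt] at this
      constructor <;> linarith
    have := K_bounds f ρ C hρ Z ζ hZn hC hZm hζ T _ _ (fun s hs => (h3 s hs).1)
      (fun s hs => (h3 s hs).2) (ℓ i) (hℓ0 i) s hs _ (hK i s)
    have e : ℓ i * (ε / (2 * ℓ i)) = ε / 2 := by field_simp
    rw [Real.dist_eq, abs_lt]
    constructor <;> nlinarith
  have h3 : Tendsto (fun s => ∑' i, w i * K i s) atTop (𝓝 (∑' i, w i * (ℓ i * c0))) := by
    refine tendsto_tsum_of_dominated_convergence hbound (fun i => (h2 i).const_mul _) ?_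
    refine Eventually.of_forall fun s i => ?_
    rw [Real.norm_of_nonneg (mul_nonneg (hw i).le (hKb i s).1)]
    exact mul_le_mul_of_nonneg_left (hKb i s).2 (hw i).le
  simp only [h1] at h3
  have := tendsto_nhds_unique h3 tendsto_const_nhds
  rw [← this, mul_comm, ← tsum_mul_right]
  simp only [mul_assoc]

theorem Z_bdd {ι : Type*} (w ℓ : ι → ℝ) (ρ c : ℝ) (hρ : 0 < ρ)
    (hc : 0 < c) (hw : ∀ i, 0 < w i) (hℓ : ∀ i, c ≤ ℓ i) (hw1 : HasSum w 1)
    (hfin : ∀ t, {i | ℓ i ≤ t}.Finite) (Z : ℝ → ℝ) (hZ0 : ∀ t < 0, Z t = 0)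
    (hZn : ∀ t, 0 ≤ Z t)
    (hZm : ∀ t h, 0 ≤ h → Real.exp (-ρ * h) * Z t ≤ Z (t + h))
    (hren : ∀ t, 0 ≤ t → Z t = Real.exp (-ρ * t) + ∑' i, w i * Z (t - ℓ i)) :
    ∃ C, ∀ t, Z t ≤ C := by
  refine ⟨Real.exp (ρ * c) / (ρ * c), fun t => ?_⟩
  rcases lt_or_ge t 0 with ht | ht
  · rw [hZ0 t ht]; positivity
  have h1 := I_renewal w ℓ ρ c hρ hc hℓ hw1 hfin Z hZ0 hZm hren (t + c) (by linarith)
  have h2 := I_lower ρ hρ Z hZn hZm (t + c) c hc.le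
  have h3 : ∫ u in (t + c - c)..(t + c), Z u ≤ (1 - Real.exp (-ρ * (t + c))) / ρ := by
    have h4 := hw1.mul_right (∫ u in (t + c - c)..(t + c), Z u)
    rw [one_mul] at h4
    refine hasSum_le (fun i => ?_) h4 h1
    refine mul_le_mul_of_nonneg_left ?_ (hw i).le
    rw [← intervalIntegral.integral_add_adjacent_intervals (Z_int ρ Z hZm (t + c - ℓ i) (t + c - c))
        (Z_int ρ Z hZm _ _)]
    have : 0 ≤ ∫ u in (t + c - ℓ i)..(t + c - c), Z u :=
      intervalIntegral.integral_nonneg (by linarith [hℓ i]) (fun u _ => hZn u)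
    linarith
  rw [add_sub_cancel_right] at h2 h3
  have h5 : (1 - Real.exp (-ρ * (t + c))) / ρ ≤ 1 / ρ := by
    gcongr
    linarith [Real.exp_pos (-ρ * (t + c))]
  have h6 : c * (Real.exp (-ρ * c) * Z t) ≤ 1 / ρ := by linarith
  have h7 : Real.exp (ρ * c) * Real.exp (-ρ * c) = 1 := by
    rw [← Real.exp_add]; simp
  rw [le_div_iff₀ (by positivity)]
  rw [le_div_iff₀ hρ] at h6
  have h8 := mul_le_mul_of_nonneg_left h6 (Real.exp_pos (ρ * c)).le
  calc Z t * (ρ * c) = (Real.exp (ρ * c) * Real.exp (-ρ * c)) * (Z t * (ρ * c)) := by rw [h7, one_mul]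
    _ = Real.exp (ρ * c) * (c * (Real.exp (-ρ * c) * Z t) * ρ) := by ring
    _ ≤ _ := by simpa using h8

/-- extremal cluster values -/
theorem extremal {ι : Type*} (w ℓ : ι → ℝ) (ρ c : ℝ) (hρ : 0 < ρ)
    (hc : 0 < c) (hw : ∀ i, 0 < w i) (hℓ : ∀ i, c ≤ ℓ i) (hw1 : HasSum w 1)
    (hm : Summable fun i => w i * ℓ i)
    (hfin : ∀ t, {i | ℓ i ≤ t}.Finite) (Z : ℝ → ℝ) (hZ0 : ∀ t < 0, Z t = 0)
    (hZn : ∀ t, 0 ≤ Z t) (C : ℝ) (hC : ∀ t, Z t ≤ C)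
    (hZm : ∀ t h, 0 ≤ h → Real.exp (-ρ * h) * Z t ≤ Z (t + h))
    (hren : ∀ t, 0 ≤ t → Z t = Real.exp (-ρ * t) + ∑' i, w i * Z (t - ℓ i))
    (hdense : ∀ ε > 0, ∃ T : ℝ, ∀ s ≥ T, ∃ s' ∈ AddSubmonoid.closure (Set.range ℓ),
      s ≤ s' ∧ s' ≤ s + ε)
    (f : Ultrafilter ℝ) (hf : (f : Filter ℝ) ≤ atTop) (c0 : ℝ)
    (hc0 : Tendsto Z f (𝓝 c0))
    (hext : (∀ s x, Tendsto (fun t => Z (t - s)) f (𝓝 x) → x ≤ c0) ∨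
      (∀ s x, Tendsto (fun t => Z (t - s)) f (𝓝 x) → c0 ≤ x)) :
    c0 * ∑' i, w i * ℓ i = 1 / ρ := by
  have hex : ∀ s, ∃ x, Tendsto (fun t => Z (t - s)) f (𝓝 x) := fun s =>
    uf_lim f _ 0 C (Eventually.of_forall fun t => ⟨hZn _, hC _⟩)
  choose ζ hζ using hex
  have hζn : ∀ s, 0 ≤ ζ s := fun s => ge_of_tendsto' (hζ s) fun t => hZn _
  have hζ0 : ζ 0 = c0 := tendsto_nhds_unique (hζ 0) (by simpa using hc0)
  have hc0n : 0 ≤ c0 := hζ0 ▸ hζn 0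
  have hζC : ∀ s, ζ s ≤ C := fun s => le_of_tendsto' (hζ s) fun t => hC _
  have hsum : ∀ s, Summable fun i => w i * ζ (s + ℓ i) := fun s =>
    Summable.of_nonneg_of_le (fun i => mul_nonneg (hw i).le (hζn _))
      (fun i => mul_le_mul_of_nonneg_left (hζC _) (hw i).le) (hw1.summable.mul_right C)
  have hharm : ∀ s, ζ s = ∑' i, w i * ζ (s + ℓ i) := by
    intro s
    have hA : Tendsto (fun t => ∑' i, w i * Z (t - s - ℓ i)) f (𝓝 (∑' i, w i * ζ (s + ℓ i))) := by
      refine tendsto_tsum_of_dominated_convergence (hw1.summable.mul_right C) (fun i => ?_) ?_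
      · simpa [sub_sub] using (hζ (s + ℓ i)).const_mul (w i)
      · refine Eventually.of_forall fun t i => ?_
        rw [Real.norm_of_nonneg (mul_nonneg (hw i).le (hZn _))]
        exact mul_le_mul_of_nonneg_left (hC _) (hw i).le
    have hB : Tendsto (fun t => Real.exp (-ρ * (t - s))) f (𝓝 0) := by
      refine Tendsto.mono_left ?_ hf
      refine Real.tendsto_exp_atBot.comp ?_
      exact (tendsto_atTop_add_const_right _ (-s) tendsto_id).const_mul_atTop_of_neg (by linarith)
    have hAB := hB.add hA
    rw [zero_add] at hAB
    refine tendsto_nhds_unique (hζ s) (hAB.congr' ?_)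
    filter_upwards [hf (eventually_ge_atTop s)] with t ht
    exact (hren (t - s) (by linarith)).symm
  have hstep : ∀ s i, ζ s = c0 → ζ (s + ℓ i) = c0 := by
    intro s i hs
    have h1 : HasSum (fun i => w i * ζ (s + ℓ i)) c0 := by
      have := (hsum s).hasSum
      rwa [← hharm s, hs] at this
    have h2 := hw1.mul_right c0
    rw [one_mul] at h2
    rcases hext with h | h
    · have h3 := h2.sub h1
      rw [sub_self] at h3
      have h4 := (hasSum_zero_iff_of_nonneg (fun j => by
        exact sub_nonneg.2 (mul_le_mul_of_nonneg_left (h (s + ℓ j) _ (hζ _)) (hw j).le))).1 h3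
      have h5 := congrFun h4 i
      simp only [Pi.zero_apply] at h5
      have := mul_left_cancel₀ (hw i).ne' (sub_eq_zero.1 h5)
      exact this.symm
    · have h3 := h1.sub h2
      rw [sub_self] at h3
      have h4 := (hasSum_zero_iff_of_nonneg (fun j => by
        exact sub_nonneg.2 (mul_le_mul_of_nonneg_left (h (s + ℓ j) _ (hζ _)) (hw j).le))).1 h3
      have h5 := congrFun h4 i
      simp only [Pi.zero_apply] at h5
      exact mul_left_cancel₀ (hw i).ne' (sub_eq_zero.1 h5)
  have hS : ∀ s ∈ AddSubmonoid.closure (Set.range ℓ), ∀ x, ζ x = c0 → ζ (x + s) = c0 := by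
    intro s hs
    induction hs using AddSubmonoid.closure_induction with
    | mem s hs =>
      obtain ⟨i, rfl⟩ := hs
      exact fun x hx => hstep x i hx
    | zero => intro x hx; simpa using hx
    | add a b _ _ ha hb => intro x hx; rw [← add_assoc]; exact hb _ (ha _ hx)
  have hS' : ∀ s ∈ AddSubmonoid.closure (Set.range ℓ), ζ s = c0 := fun s hs => by
    simpa using hS s hs 0 hζ0
  have hmono : ∀ s h, 0 ≤ h → Real.exp (-ρ * h) * ζ (s + h) ≤ ζ s := by
    intro s h hh
    refine le_of_tendsto_of_tendsto' ((hζ (s + h)).const_mul _) (hζ s) fun t => ?_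
    have := hZm (t - (s + h)) h hh
    have e : t - (s + h) + h = t - s := by ring
    rw [e] at this
    exact this
  refine const_ident w ℓ ρ c hρ hc hw hℓ hw1 hm hfin Z hZ0 hZn C hC hZm hren f hf ζ hζ c0 ?_
  rw [tendsto_order]
  constructor
  · intro a ha
    have : Tendsto (fun ε : ℝ => Real.exp (-ρ * ε) * c0) (𝓝[>] 0) (𝓝 c0) := by
      have : Continuous (fun ε : ℝ => Real.exp (-ρ * ε) * c0) := by fun_prop
      have := this.tendsto 0
      simp only [mul_zero, Real.exp_zero, one_mul] at this
      exact this.mono_left nhdsWithin_le_nhds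
    obtain ⟨ε, h1, hε⟩ := ((this.eventually_const_lt ha).and self_mem_nhdsWithin).exists
    obtain ⟨T, hT⟩ := hdense ε hε
    filter_upwards [eventually_ge_atTop T] with s hs
    obtain ⟨s', hs', h2, h3⟩ := hT s hs
    have h4 := hmono s (s' - s) (by linarith)
    rw [add_sub_cancel, hS' s' hs'] at h4
    refine h1.trans_le (le_trans ?_ h4)
    refine mul_le_mul_of_nonneg_right ?_ hc0n
    apply Real.exp_le_exp.2
    have : (0:ℝ) < ε := hε
    nlinarith
  · intro b hb
    have : Tendsto (fun ε : ℝ => Real.exp (ρ * ε) * c0) (𝓝[>] 0) (𝓝 c0) := by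
      have : Continuous (fun ε : ℝ => Real.exp (ρ * ε) * c0) := by fun_prop
      have := this.tendsto 0
      simp only [mul_zero, Real.exp_zero, one_mul] at this
      exact this.mono_left nhdsWithin_le_nhds
    obtain ⟨ε, h1, hε⟩ := ((this.eventually_lt_const hb).and self_mem_nhdsWithin).exists
    obtain ⟨T, hT⟩ := hdense ε hε
    filter_upwards [eventually_ge_atTop (T + ε)] with s hs
    obtain ⟨s', hs', h2, h3⟩ := hT (s - ε) (by linarith)
    have h4 := hmono s' (s - s') (by linarith)
    rw [add_sub_cancel, hS' s' hs'] at h4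
    refine lt_of_le_of_lt ?_ h1
    have h5 := mul_le_mul_of_nonneg_left h4 (Real.exp_pos (ρ * (s - s'))).le
    rw [← mul_assoc, ← Real.exp_add] at h5
    simp only [neg_mul, add_neg_cancel, Real.exp_zero, one_mul] at h5
    refine h5.trans ?_
    refine mul_le_mul_of_nonneg_right ?_ hc0n
    apply Real.exp_le_exp.2
    nlinarith

theorem exists_uf (Z : ℝ → ℝ) (L : ℝ) (h : ∀ ε > 0, ∃ᶠ t in atTop, |Z t - L| < ε) :
    ∃ f : Ultrafilter ℝ, (f : Filter ℝ) ≤ atTop ∧ Tendsto Z f (𝓝 L) := by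
  have h1 : MapClusterPt L atTop Z := by
    rw [(Metric.nhds_basis_ball (x := L)).mapClusterPt_iff_frequently]
    intro ε hε
    simpa [Metric.mem_ball, Real.dist_eq] using h ε hε
  exact mapClusterPt_iff_ultrafilter.1 h1

theorem renewal_thm {ι : Type*} (w ℓ : ι → ℝ) (ρ c : ℝ) (hρ : 0 < ρ)
    (hc : 0 < c) (hw : ∀ i, 0 < w i) (hℓ : ∀ i, c ≤ ℓ i) (hw1 : HasSum w 1)
    (hm : Summable fun i => w i * ℓ i) (hmpos : 0 < ∑' i, w i * ℓ i)
    (hfin : ∀ t, {i | ℓ i ≤ t}.Finite) (Z : ℝ → ℝ) (hZ0 : ∀ t < 0, Z t = 0)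
    (hZn : ∀ t, 0 ≤ Z t)
    (hZm : ∀ t h, 0 ≤ h → Real.exp (-ρ * h) * Z t ≤ Z (t + h))
    (hren : ∀ t, 0 ≤ t → Z t = Real.exp (-ρ * t) + ∑' i, w i * Z (t - ℓ i))
    (hdense : ∀ ε > 0, ∃ T : ℝ, ∀ s ≥ T, ∃ s' ∈ AddSubmonoid.closure (Set.range ℓ),
      s ≤ s' ∧ s' ≤ s + ε) :
    Tendsto Z atTop (𝓝 (1 / ρ / ∑' i, w i * ℓ i)) := by
  obtain ⟨C, hC⟩ := Z_bdd w ℓ ρ c hρ hc hw hℓ hw1 hfin Z hZ0 hZn hZm hren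
  have hb1 : IsBoundedUnder (· ≤ ·) atTop Z := isBoundedUnder_of ⟨C, hC⟩
  have hb2 : IsBoundedUnder (· ≥ ·) atTop Z := isBoundedUnder_of ⟨0, hZn⟩
  have hsh : ∀ (f : Ultrafilter ℝ) (s : ℝ), (f : Filter ℝ) ≤ atTop →
      Tendsto (fun t => t - s) f atTop := fun f s hf =>
    (tendsto_atTop_add_const_right _ (-s) tendsto_id).mono_left hf
  refine tendsto_of_le_liminf_of_limsup_le ?_ ?_ hb1 hb2
  · have hlt : ∀ ε > 0, ∀ᶠ t in atTop, liminf Z atTop - ε < Z t := fun ε hε =>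
      eventually_lt_of_lt_liminf (by linarith) hb2
    obtain ⟨f, hf, hfl⟩ := exists_uf Z (liminf Z atTop) (by
      intro ε hε
      have h1 := frequently_lt_of_liminf_lt (f := atTop) (u := Z) (b := liminf Z atTop + ε)
        hb1.isCoboundedUnder_ge (by linarith)
      refine (h1.and_eventually (hlt ε hε)).mono fun t ht => ?_
      rw [abs_lt]; constructor <;> linarith [ht.1, ht.2])
    have := extremal w ℓ ρ c hρ hc hw hℓ hw1 hm hfin Z hZ0 hZn C hC hZm hren hdense f hf _ hfl
      (Or.inr fun s x hx => by
        refine le_of_forall_pos_sub_le fun ε hε => ?_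
        exact ge_of_tendsto hx (((hsh f s hf).eventually (hlt ε hε)).mono fun t ht => ht.le))
    rw [div_le_iff₀ hmpos, this]
  · have hlt : ∀ ε > 0, ∀ᶠ t in atTop, Z t < limsup Z atTop + ε := fun ε hε =>
      eventually_lt_of_limsup_lt (by linarith) hb1
    obtain ⟨f, hf, hfl⟩ := exists_uf Z (limsup Z atTop) (by
      intro ε hε
      have h1 := frequently_lt_of_lt_limsup (f := atTop) (u := Z) (b := limsup Z atTop - ε)
        hb2.isCoboundedUnder_le (by linarith)
      refine (h1.and_eventually (hlt ε hε)).mono fun t ht => ?_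
      rw [abs_lt]; constructor <;> linarith [ht.1, ht.2])
    have := extremal w ℓ ρ c hρ hc hw hℓ hw1 hm hfin Z hZ0 hZn C hC hZm hren hdense f hf _ hfl
      (Or.inl fun s x hx => by
        refine le_of_forall_pos_le_add fun ε hε => ?_
        exact le_of_tendsto hx (((hsh f s hf).eventually (hlt ε hε)).mono fun t ht => ht.le))
    rw [le_div_iff₀ hmpos, this]

end renewal

section comb
open Classical

theorem af_finite (P : Set ℕ) (m n : ℕ) (hn : 1 ≤ n) :
    Finite {t : Fin m → ℕ // (∀ i, t i ∈ P) ∧ ∏ i, t i = n} := by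
  have : (Set.pi Set.univ (fun _ : Fin m => Set.Iic n)).Finite :=
    Set.Finite.pi (fun _ => Set.finite_Iic n)
  refine Set.Finite.to_subtype (s := {t : Fin m → ℕ | (∀ i, t i ∈ P) ∧ ∏ i, t i = n})
    (this.subset ?_)
  rintro t ⟨-, ht⟩ i -
  exact Nat.le_of_dvd hn (ht ▸ Finset.dvd_prod_of_mem t (Finset.mem_univ i))

theorem af_zero (P : Set ℕ) (n : ℕ) : af P 0 n = if n = 1 then 1 else 0 := by
  unfold af
  split_ifs with h
  · subst h
    rw [Nat.card_eq_one_iff_unique]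
    exact ⟨⟨fun a b => Subtype.ext (Subsingleton.elim _ _)⟩, ⟨⟨fun i => i.elim0, by simp⟩⟩⟩
  · rw [Nat.card_eq_zero]
    left
    refine ⟨fun t => h ?_⟩
    have := t.2.2
    simpa using this.symm

theorem af_succ (P : Set ℕ) (m n : ℕ) (hn : 1 ≤ n) :
    af P (m + 1) n = ∑ p ∈ n.divisors.filter (· ∈ P), af P m (n / p) := by
  have hpos : ∀ p : {p // p ∈ n.divisors.filter (· ∈ P)}, 1 ≤ n / p.1 := fun p => by
    have h := (Finset.mem_filter.1 p.2).1
    exact Nat.div_pos (Nat.divisor_le h) (Nat.pos_of_mem_divisors h)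
  let e : {t : Fin (m + 1) → ℕ // (∀ i, t i ∈ P) ∧ ∏ i, t i = n} ≃
      Σ p : {p // p ∈ n.divisors.filter (· ∈ P)},
        {t : Fin m → ℕ // (∀ i, t i ∈ P) ∧ ∏ i, t i = n / p.1} :=
    { toFun := fun t => ⟨⟨t.1 0, by
          have h := t.2.2
          rw [Finset.mem_filter, Nat.mem_divisors]
          exact ⟨⟨(Finset.dvd_prod_of_mem t.1 (Finset.mem_univ 0)).trans h.dvd, by omega⟩, t.2.1 0⟩⟩,
        ⟨fun i => t.1 i.succ, fun i => t.2.1 _, by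
          have h := t.2.2
          rw [Fin.prod_univ_succ] at h
          have h0 : 0 < t.1 0 := Nat.pos_of_ne_zero (by intro h0; rw [h0] at h; omega)
          exact (Nat.div_eq_of_eq_mul_right h0 h.symm).symm⟩⟩
      invFun := fun x => ⟨Fin.cons x.1.1 x.2.1, by
          intro i
          refine Fin.cases ?_ (fun j => ?_) i
          · simpa using (Finset.mem_filter.1 x.1.2).2
          · simpa using x.2.2.1 j, by
          rw [Fin.prod_univ_succ]
          simp only [Fin.cons_zero, Fin.cons_succ]
          rw [x.2.2.2]
          exact Nat.mul_div_cancel' (Nat.dvd_of_mem_divisors (Finset.mem_filter.1 x.1.2).1)⟩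
      left_inv := fun t => by
        apply Subtype.ext
        funext i
        refine Fin.cases ?_ (fun j => ?_) i <;> simp
      right_inv := fun x => by
        rcases x with ⟨⟨p, hp⟩, ⟨t, ht⟩⟩
        rfl }
  have : ∀ p : {p // p ∈ n.divisors.filter (· ∈ P)},
      Finite {t : Fin m → ℕ // (∀ i, t i ∈ P) ∧ ∏ i, t i = n / p.1} := fun p =>
    af_finite P m _ (hpos p)
  unfold af
  rw [Nat.card_congr e, Nat.card_sigma]
  exact Finset.sum_coe_sort (n.divisors.filter (· ∈ P))
    (fun p => Nat.card {t : Fin m → ℕ // (∀ i, t i ∈ P) ∧ ∏ i, t i = n / p})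

theorem af_eq_zero (P : Set ℕ) (hP : ∀ n ∈ P, 2 ≤ n) (m n : ℕ) (hn : 1 ≤ n) (hm : n ≤ m) :
    af P m n = 0 := by
  unfold af
  rw [Nat.card_eq_zero]
  left
  refine ⟨fun t => ?_⟩
  have h1 : ∏ _i : Fin m, 2 ≤ ∏ i, t.1 i := Finset.prod_le_prod' fun i _ => hP _ (t.2.1 i)
  rw [t.2.2] at h1
  simp at h1
  have := Nat.lt_two_pow_self (n := m)
  omega

theorem af_summable (P : Set ℕ) (hP : ∀ n ∈ P, 2 ≤ n) (n : ℕ) (hn : 1 ≤ n) :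
    Summable fun m => (af P m n : ℝ) := by
  apply summable_of_ne_finset_zero (s := Finset.range n)
  intro m hm
  rw [af_eq_zero P hP m n hn (by simpa using hm)]
  simp

theorem aTot_nonneg (P : Set ℕ) (n : ℕ) : 0 ≤ aTot P n := tsum_nonneg fun _ => by positivity

theorem aTot_rec (P : Set ℕ) (hP : ∀ n ∈ P, 2 ≤ n) (n : ℕ) (hn : 1 ≤ n) :
    aTot P n = (if n = 1 then 1 else 0) + ∑ p ∈ n.divisors.filter (· ∈ P), aTot P (n / p) := by
  unfold aTot
  rw [(af_summable P hP n hn).tsum_eq_zero_add, af_zero]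
  congr 1
  · split_ifs <;> simp
  · simp only [af_succ P _ n hn]
    push_cast
    rw [Summable.tsum_finsetSum]
    intro p hp
    have h := (Finset.mem_filter.1 hp).1
    exact af_summable P hP _ (Nat.div_pos (Nat.divisor_le h) (Nat.pos_of_mem_divisors h))

theorem Acum_rec (P : Set ℕ) (hP : ∀ n ∈ P, 2 ≤ n) (N : ℕ) (hN : 1 ≤ N) :
    Acum P N = 1 + ∑ p ∈ (Finset.Icc 1 N).filter (· ∈ P), Acum P (N / p) := by
  unfold Acum
  rw [Finset.sum_congr rfl (fun n hn => aTot_rec P hP n (Finset.mem_Icc.1 hn).1),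
    Finset.sum_add_distrib]
  congr 1
  · rw [Finset.sum_ite_eq' (Finset.Icc 1 N) 1 (fun _ => (1:ℝ))]
    simp [hN]
  · rw [Finset.sum_sigma', Finset.sum_sigma']
    refine Finset.sum_nbij' (fun x => ⟨x.2, x.1 / x.2⟩) (fun x => ⟨x.1 * x.2, x.1⟩) ?_ ?_ ?_ ?_ ?_
    · rintro ⟨n, p⟩ h
      simp only [Finset.mem_sigma, Finset.mem_Icc, Finset.mem_filter, Nat.mem_divisors] at h ⊢
      obtain ⟨⟨h1, h2⟩, ⟨h3, h4⟩, h5⟩ := h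
      have hp := hP p h5
      have hpn := Nat.le_of_dvd h1 h3
      exact ⟨⟨⟨by omega, by omega⟩, h5⟩, Nat.div_pos hpn (by omega), Nat.div_le_div_right h2⟩
    · rintro ⟨p, k⟩ h
      simp only [Finset.mem_sigma, Finset.mem_Icc, Finset.mem_filter, Nat.mem_divisors] at h ⊢
      obtain ⟨⟨⟨h1, h2⟩, h3⟩, h4, h5⟩ := h
      rw [Nat.le_div_iff_mul_le (by omega)] at h5
      have : 1 ≤ p * k := Nat.mul_pos h1 h4
      exact ⟨⟨this, by rw [mul_comm]; exact h5⟩, ⟨dvd_mul_right _ _, by omega⟩, h3⟩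
    · rintro ⟨n, p⟩ h
      simp only [Finset.mem_sigma, Finset.mem_Icc, Finset.mem_filter, Nat.mem_divisors] at h ⊢
      obtain ⟨⟨h1, h2⟩, ⟨h3, h4⟩, h5⟩ := h
      simp [Nat.mul_div_cancel' h3]
    · rintro ⟨p, k⟩ h
      simp only [Finset.mem_sigma, Finset.mem_Icc, Finset.mem_filter, Nat.mem_divisors] at h ⊢
      obtain ⟨⟨⟨h1, h2⟩, h3⟩, h4, h5⟩ := h
      simp [Nat.mul_div_cancel_left k h1]
    · rintro ⟨n, p⟩ h
      rfl

theorem Acum_mono (P : Set ℕ) : Monotone (Acum P) := by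
  intro a b hab
  unfold Acum
  exact Finset.sum_le_sum_of_subset_of_nonneg (Finset.Icc_subset_Icc_right hab)
    (fun n _ _ => aTot_nonneg P n)

theorem Acum_zero (P : Set ℕ) : Acum P 0 = 0 := by simp [Acum]

end comb

section final
open Topology

theorem kappa_lt_exists (P : Set ℕ) (ρ : ℝ) (h : kappa P < (ρ : EReal)) :
    ∃ r : ℝ, r < ρ ∧ Summable (fun n : P => ((n : ℕ) : ℝ) ^ (-r)) := by
  unfold kappa at h
  rw [sInf_lt_iff] at h
  obtain ⟨x, ⟨r, rfl, hr⟩, hx⟩ := h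
  exact ⟨r, by exact_mod_cast hx, hr⟩

theorem summable_wlog (P : Set ℕ) (hP : ∀ n ∈ P, 2 ≤ n) (ρ : ℝ) (h : kappa P < (ρ : EReal)) :
    Summable (fun n : P => ((n : ℕ) : ℝ) ^ (-ρ) * Real.log (n : ℕ)) := by
  obtain ⟨r, hr, hs⟩ := kappa_lt_exists P ρ h
  refine Summable.of_nonneg_of_le (fun n => ?_) (fun n => ?_) (hs.mul_right (1 / (ρ - r)))
  · have := hP n n.2
    exact mul_nonneg (by positivity) (Real.log_nonneg (by exact_mod_cast (by omega : 1 ≤ (n:ℕ))))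
  · have h2 := hP n n.2
    have hn : (0:ℝ) < (n : ℕ) := by positivity
    have h1 := Real.log_le_rpow_div hn.le (show 0 < ρ - r by linarith)
    calc ((n : ℕ) : ℝ) ^ (-ρ) * Real.log (n : ℕ)
        ≤ ((n : ℕ) : ℝ) ^ (-ρ) * (((n : ℕ) : ℝ) ^ (ρ - r) / (ρ - r)) := by gcongr
      _ = ((n : ℕ) : ℝ) ^ (-ρ + (ρ - r)) * (1 / (ρ - r)) := by rw [Real.rpow_add hn]; ring
      _ = _ := by congr 2; ring

theorem Z_main (P : Set ℕ) (hP : ∀ n ∈ P, 2 ≤ n) (hP2 : P.Nontrivial)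
    (ρ : ℝ) (hρ0 : 0 < ρ) (hρκ : kappa P < (ρ : EReal)) (hρ1 : Pval P ρ = 1)
    (hnp : ∀ d : ℕ, 2 ≤ d → ¬ P ⊆ {n : ℕ | ∃ k : ℕ, 1 ≤ k ∧ n = d ^ k}) :
    0 < ∑' n : P, ((n : ℕ) : ℝ) ^ (-ρ) * Real.log (n : ℕ) ∧
    Tendsto (fun t : ℝ => Real.exp (-ρ * t) * Acum P ⌊Real.exp t⌋₊) atTop
      (𝓝 (1 / ρ / ∑' n : P, ((n : ℕ) : ℝ) ^ (-ρ) * Real.log (n : ℕ))) := by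
  have hpos : ∀ n : P, (0:ℝ) < (n : ℕ) := fun n => by have := hP n n.2; positivity
  have hlog : ∀ n : P, Real.log 2 ≤ Real.log (n : ℕ) := fun n =>
    Real.log_le_log (by norm_num) (by exact_mod_cast hP n n.2)
  have hlog2 : 0 < Real.log 2 := Real.log_pos (by norm_num)
  have hw : ∀ n : P, 0 < ((n : ℕ) : ℝ) ^ (-ρ) := fun n => Real.rpow_pos_of_pos (hpos n) _
  have hsum : Summable (fun n : P => ((n : ℕ) : ℝ) ^ (-ρ)) := by
    by_contra h
    have := tsum_eq_zero_of_not_summable h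
    unfold Pval at hρ1
    rw [this] at hρ1
    norm_num at hρ1
  have hw1 : HasSum (fun n : P => ((n : ℕ) : ℝ) ^ (-ρ)) 1 := hρ1 ▸ hsum.hasSum
  have hm := summable_wlog P hP ρ hρκ
  obtain ⟨p, hp⟩ := hP2.nonempty
  have hmpos : 0 < ∑' n : P, ((n : ℕ) : ℝ) ^ (-ρ) * Real.log (n : ℕ) :=
    hm.tsum_pos (fun n => mul_nonneg (hw n).le (hlog2.le.trans (hlog n))) ⟨p, hp⟩
      (mul_pos (hw _) (hlog2.trans_le (hlog _)))
  refine ⟨hmpos, ?_⟩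
  have hA0 : ∀ n, 0 ≤ Acum P n := fun n => Finset.sum_nonneg fun i _ => aTot_nonneg P i
  refine renewal_thm (fun n : P => ((n : ℕ) : ℝ) ^ (-ρ)) (fun n : P => Real.log (n : ℕ)) ρ
    (Real.log 2) hρ0 hlog2 hw hlog hw1 hm hmpos ?_ _ ?_ ?_ ?_ ?_ ?_
  · intro t
    have : (Set.Iic ⌊Real.exp t⌋₊).Finite := Set.finite_Iic _
    refine (this.preimage (f := fun n : P => (n : ℕ)) (Subtype.val_injective.injOn)).subset ?_
    intro n hn
    have hn' : Real.log (n : ℕ) ≤ t := hn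
    rw [Real.log_le_iff_le_exp (hpos n)] at hn'
    exact Nat.le_floor hn'
  · intro t ht
    have : ⌊Real.exp t⌋₊ = 0 := Nat.floor_eq_zero.2 (by rw [← Real.exp_zero]; exact Real.exp_lt_exp.2 ht)
    rw [this, Acum_zero, mul_zero]
  · intro t
    exact mul_nonneg (Real.exp_pos _).le (hA0 _)
  · intro t h hh
    rw [← mul_assoc, ← Real.exp_add]
    have e : -ρ * h + -ρ * t = -ρ * (t + h) := by ring
    rw [e]
    refine mul_le_mul_of_nonneg_left (Acum_mono P ?_) (Real.exp_pos _).le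
    exact Nat.floor_mono (Real.exp_le_exp.2 (by linarith))
  · intro t ht
    have hN : 1 ≤ ⌊Real.exp t⌋₊ := Nat.le_floor (by simpa using ht)
    have e1 : ∀ n : P, ((n : ℕ) : ℝ) ^ (-ρ) * (Real.exp (-ρ * (t - Real.log (n : ℕ))) *
        Acum P ⌊Real.exp (t - Real.log (n : ℕ))⌋₊) =
        Real.exp (-ρ * t) * Acum P (⌊Real.exp t⌋₊ / (n : ℕ)) := by
      intro n
      rw [Real.exp_sub, Real.exp_log (hpos n), Nat.floor_div_natCast, ← mul_assoc,
        Real.rpow_def_of_pos (hpos n), ← Real.exp_add]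
      congr 2
      ring
    simp only [e1]
    rw [tsum_mul_left, tsum_subtype P (fun n => Acum P (⌊Real.exp t⌋₊ / n)),
      tsum_eq_sum (s := Finset.Icc 1 ⌊Real.exp t⌋₊), Acum_rec P hP _ hN, mul_add, mul_one,
      Finset.sum_filter]
    · rw [Finset.mul_sum, Finset.mul_sum]
      congr 1
    · intro n hn
      have : ⌊Real.exp t⌋₊ / n = 0 := by
        rw [Nat.div_eq_zero_iff]
        rw [Finset.mem_Icc] at hn
        omega
      simp [Set.indicator_apply, this, Acum_zero]
  · intro ε hε
    have := semigroup_dense P hP hP2 hnp ε hε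
    rw [Set.image_eq_range] at this
    exact this

theorem S_lower (P : Set ℕ) (k N M : ℕ) (x : ℝ) (hx : 0 ≤ x) (hM : M ≤ N)
    (h : ∀ n : ℕ, M < n → x ≤ Real.log n) :
    x ^ k * (Acum P N - Acum P M) ≤ ∑ n ∈ Finset.Icc 1 N, aTot P n * (Real.log n) ^ k := by
  have hsub : Finset.Icc 1 M ⊆ Finset.Icc 1 N := Finset.Icc_subset_Icc_right hM
  have h1 : Acum P N - Acum P M = ∑ n ∈ Finset.Icc 1 N \ Finset.Icc 1 M, aTot P n := by
    unfold Acum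
    rw [← Finset.sum_sdiff hsub]; ring
  rw [h1, Finset.mul_sum]
  have hnn : ∀ n : ℕ, 0 ≤ aTot P n * (Real.log n) ^ k := fun n =>
    mul_nonneg (aTot_nonneg P n) (pow_nonneg (Real.log_natCast_nonneg n) k)
  refine le_trans (Finset.sum_le_sum fun n hn => ?_)
    (Finset.sum_le_sum_of_subset_of_nonneg Finset.sdiff_subset fun n _ _ => hnn n)
  rw [mul_comm]
  refine mul_le_mul_of_nonneg_left ?_ (aTot_nonneg P n)
  refine pow_le_pow_left₀ hx (h n ?_) k
  simp only [Finset.mem_sdiff, Finset.mem_Icc] at hn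
  omega

theorem S_upper (P : Set ℕ) (k N : ℕ) :
    ∑ n ∈ Finset.Icc 1 N, aTot P n * (Real.log n) ^ k ≤ Acum P N * (Real.log N) ^ k := by
  unfold Acum
  rw [Finset.sum_mul]
  refine Finset.sum_le_sum fun n hn => ?_
  rw [Finset.mem_Icc] at hn
  refine mul_le_mul_of_nonneg_left ?_ (aTot_nonneg P n)
  refine pow_le_pow_left₀ (Real.log_natCast_nonneg n) ?_ k
  exact Real.log_le_log (by exact_mod_cast hn.1) (by exact_mod_cast hn.2)

theorem S_tendsto (P : Set ℕ) (ρ c : ℝ) (hρ : 0 < ρ) (hc : 0 < c)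
    (hZ : Tendsto (fun t : ℝ => Real.exp (-ρ * t) * Acum P ⌊Real.exp t⌋₊) atTop (𝓝 c)) (k : ℕ) :
    Tendsto (fun N : ℕ => Acum P N / (N : ℝ) ^ ρ) atTop (𝓝 c) ∧
    Tendsto (fun N : ℕ => (∑ n ∈ Finset.Icc 1 N, aTot P n * (Real.log n) ^ k) /
      ((N : ℝ) ^ ρ * (Real.log N) ^ k)) atTop (𝓝 c) := by
  have hlogN : Tendsto (fun N : ℕ => Real.log N) atTop atTop :=
    Real.tendsto_log_atTop.comp tendsto_natCast_atTop_atTop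
  have hA : Tendsto (fun N : ℕ => Acum P N / (N : ℝ) ^ ρ) atTop (𝓝 c) := by
    refine (hZ.comp hlogN).congr' ?_
    filter_upwards [eventually_ge_atTop 1] with N hN
    have hN0 : (0:ℝ) < N := by positivity
    simp only [Function.comp]
    rw [Real.exp_log hN0, Nat.floor_natCast, Real.rpow_def_of_pos hN0, div_eq_mul_inv,
      ← Real.exp_neg, mul_comm]
    congr 2
    ring
  refine ⟨hA, ?_⟩
  have hAδ : ∀ δ : ℝ, 0 < δ → δ < 1 →
      Tendsto (fun N : ℕ => Acum P ⌊(N : ℝ) ^ δ⌋₊ / (N : ℝ) ^ ρ) atTop (𝓝 0) := by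
    intro δ h0 h1
    have hA1 := hZ.comp (hlogN.const_mul_atTop h0)
    have hA2 : Tendsto (fun N : ℕ => Real.exp (-(ρ * (1 - δ)) * Real.log N)) atTop (𝓝 0) :=
      Real.tendsto_exp_atBot.comp (hlogN.const_mul_atTop_of_neg (by nlinarith))
    have hA3 := hA1.mul hA2
    rw [mul_zero] at hA3
    refine hA3.congr' ?_
    filter_upwards [eventually_ge_atTop 1] with N hN
    have hN0 : (0:ℝ) < N := by positivity
    simp only [Function.comp]
    rw [mul_right_comm, ← Real.exp_add, Real.rpow_def_of_pos hN0, Real.rpow_def_of_pos hN0,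
      div_eq_mul_inv, ← Real.exp_neg, mul_comm]
    congr 2
    · rw [mul_comm]
    · ring
  rw [tendsto_order]
  constructor
  · intro a ha
    have hcont : Tendsto (fun δ : ℝ => δ ^ k * (c - 0)) (𝓝[<] 1) (𝓝 c) := by
      have : Continuous (fun δ : ℝ => δ ^ k * (c - 0)) := by fun_prop
      have := this.tendsto 1
      simp only [one_pow, sub_zero, one_mul] at this
      simp only [sub_zero]
      exact this.mono_left nhdsWithin_le_nhds
    have hI : ∀ᶠ δ : ℝ in 𝓝[<] 1, 0 < δ ∧ δ < 1 := by
      have : Set.Ioo (0:ℝ) 1 ∈ 𝓝[<] (1:ℝ) := Ioo_mem_nhdsLT (by norm_num)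
      exact this
    obtain ⟨δ, h1, h0, hδ1⟩ := ((hcont.eventually_const_lt ha).and hI).exists
    have hlow := (hA.sub (hAδ δ h0 hδ1)).const_mul (δ ^ k)
    filter_upwards [hlow.eventually_const_lt h1, eventually_ge_atTop 2] with N hN hN2
    refine hN.trans_le ?_
    have hN0 : (0:ℝ) < N := by positivity
    have hN1 : (1:ℝ) < N := by exact_mod_cast hN2
    have hl : 0 < Real.log N := Real.log_pos hN1
    have hr : 0 < (N : ℝ) ^ ρ := Real.rpow_pos_of_pos hN0 _
    have := S_lower P k N ⌊(N : ℝ) ^ δ⌋₊ (δ * Real.log N) (by positivity) (by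
        apply Nat.floor_le_of_le
        calc (N : ℝ) ^ δ ≤ (N : ℝ) ^ (1:ℝ) := Real.rpow_le_rpow_of_exponent_le hN1.le hδ1.le
          _ = N := Real.rpow_one _) (by
        intro n hn
        have h2 := (Nat.lt_of_floor_lt hn).le
        rw [← Real.log_rpow hN0]
        exact Real.log_le_log (by positivity) h2)
    rw [le_div_iff₀ (by positivity)]
    refine le_trans (le_of_eq ?_) this
    rw [mul_pow]
    field_simp
  · intro b hb
    filter_upwards [hA.eventually_lt_const hb, eventually_ge_atTop 2] with N hN hN2
    refine lt_of_le_of_lt ?_ hN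
    have hN0 : (0:ℝ) < N := by positivity
    have hN1 : (1:ℝ) < N := by exact_mod_cast hN2
    have hl : 0 < Real.log N := Real.log_pos hN1
    have hr : 0 < (N : ℝ) ^ ρ := Real.rpow_pos_of_pos hN0 _
    rw [div_le_div_iff₀ (by positivity) hr]
    have := mul_le_mul_of_nonneg_right (S_upper P k N) hr.le
    linarith

end final

/-- **Logarithmically weighted sums.** Under the stated assumptions, including
non-periodicity, for every fixed `k ≥ 0`,
`Σ_{n ≤ N} a(n) (log n)^k ∼ (μ/ρ) N^ρ (log N)^k ∼ A(N) (log N)^k`. -/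
theorem log_weighted_sum_asymptotic
    (P : Set ℕ) (hP : ∀ n ∈ P, 2 ≤ n) (hP2 : P.Nontrivial)
    (hκ : 1 < PvalE P (kappa P))
    (ρ : ℝ) (hρ0 : 0 < ρ) (hρκ : kappa P < (ρ : EReal)) (hρ1 : Pval P ρ = 1)
    (μ : ℝ) (hμ : μ = -1 / Pderiv1 P ρ)
    (hnp : ∀ d : ℕ, 2 ≤ d → ¬ P ⊆ {n : ℕ | ∃ k : ℕ, 1 ≤ k ∧ n = d ^ k})
    (k : ℕ) :
    Asymptotics.IsEquivalent atTop
      (fun N : ℕ => ∑ n ∈ Finset.Icc 1 N, aTot P n * (Real.log n) ^ k)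
      (fun N : ℕ => (μ / ρ) * (N : ℝ) ^ ρ * (Real.log N) ^ k) ∧
    Asymptotics.IsEquivalent atTop
      (fun N : ℕ => ∑ n ∈ Finset.Icc 1 N, aTot P n * (Real.log n) ^ k)
      (fun N : ℕ => Acum P N * (Real.log N) ^ k) := by
  obtain ⟨hmpos, hZ⟩ := Z_main P hP hP2 ρ hρ0 hρκ hρ1 hnp
  have hμ' : μ / ρ = 1 / ρ / ∑' n : P, ((n : ℕ) : ℝ) ^ (-ρ) * Real.log (n : ℕ) := by
    rw [hμ]
    unfold Pderiv1
    rw [neg_div_neg_eq, div_right_comm]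
  rw [← hμ'] at hZ
  have hc : 0 < μ / ρ := by rw [hμ']; positivity
  obtain ⟨hA, hS⟩ := S_tendsto P ρ (μ / ρ) hρ0 hc hZ k
  set c := μ / ρ with hcdef
  have hev : ∀ᶠ N : ℕ in atTop, 0 < (N : ℝ) ^ ρ ∧ 0 < (Real.log N) ^ k := by
    filter_upwards [eventually_ge_atTop 2] with N hN2
    have hN0 : (0:ℝ) < N := by positivity
    have hN1 : (1:ℝ) < N := by exact_mod_cast hN2
    exact ⟨Real.rpow_pos_of_pos hN0 _, pow_pos (Real.log_pos hN1) _⟩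
  have hne : ∀ᶠ N : ℕ in atTop, c * (N : ℝ) ^ ρ * (Real.log N) ^ k ≠ 0 := by
    filter_upwards [hev] with N hN
    exact (mul_pos (mul_pos hc hN.1) hN.2).ne'
  have h1 : Asymptotics.IsEquivalent atTop
      (fun N : ℕ => ∑ n ∈ Finset.Icc 1 N, aTot P n * (Real.log n) ^ k)
      (fun N : ℕ => c * (N : ℝ) ^ ρ * (Real.log N) ^ k) := by
    rw [isEquivalent_iff_tendsto_one hne]
    have := hS.div_const c
    rw [div_self hc.ne'] at this
    refine this.congr fun N => ?_
    simp only [Pi.div_apply]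
    rw [div_div]
    congr 1
    ring
  have h2 : Asymptotics.IsEquivalent atTop
      (fun N : ℕ => Acum P N * (Real.log N) ^ k)
      (fun N : ℕ => c * (N : ℝ) ^ ρ * (Real.log N) ^ k) := by
    rw [isEquivalent_iff_tendsto_one hne]
    have := hA.div_const c
    rw [div_self hc.ne'] at this
    refine this.congr' ?_
    filter_upwards [hev] with N hN
    simp only [Pi.div_apply]
    rw [div_div, mul_div_mul_right _ _ hN.2.ne', mul_comm c]
  exact ⟨h1, h1.trans h2.symm⟩
end
end

section
/- Under the non-periodicity condition, 𝒫(s) ≠ 1 for every complex s with Re(s) = ρ and s ≠ ρ; consequently 𝒜(s) = 1/(1 − 𝒫(s)) is analytic on the closed half-plane {s : Re(s) ≥ ρ} except at the single point s = ρ, where it has a simple pole with 𝒜(s) ∼ −1/(𝒫′(ρ)(s − ρ)) as s → ρ. -/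
open scoped BigOperators ENNReal
open Filter Asymptotics

noncomputable section

/-- The Dirichlet series `𝒫(s) = Σ_{n ∈ 𝒫} n^{-s}` at a complex point. -/
def PvalC (P : Set ℕ) (s : ℂ) : ℂ := ∑' n : P, ((n : ℕ) : ℂ) ^ (-s)

open Classical in
def fP (P : Set ℕ) : ℕ → ℂ := fun n => if n ∈ P then 1 else 0

lemma term_fP (P : Set ℕ) (hP : ∀ n ∈ P, 2 ≤ n) (s : ℂ) :
    LSeries.term (fP P) s = P.indicator (fun n : ℕ => (n : ℂ) ^ (-s)) := by
  funext n
  by_cases h : n ∈ P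
  · have h0 : n ≠ 0 := by have := hP n h; omega
    rw [LSeries.term_of_ne_zero h0, Set.indicator_of_mem h, Complex.cpow_neg]
    simp [fP, h]
  · rw [Set.indicator_of_notMem h, LSeries.term_def]
    simp [fP, h]

lemma term_log_fP (P : Set ℕ) (hP : ∀ n ∈ P, 2 ≤ n) (s : ℂ) :
    LSeries.term (LSeries.logMul (fP P)) s =
      P.indicator (fun n : ℕ => (n : ℂ) ^ (-s) * Complex.log n) := by
  funext n
  by_cases h : n ∈ P
  · have h0 : n ≠ 0 := by have := hP n h; omega
    rw [LSeries.term_of_ne_zero h0, Set.indicator_of_mem h, Complex.cpow_neg]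
    simp [fP, h, LSeries.logMul]
    ring
  · rw [Set.indicator_of_notMem h, LSeries.term_def]
    simp [fP, h, LSeries.logMul]

lemma PvalC_eq (P : Set ℕ) (hP : ∀ n ∈ P, 2 ≤ n) : PvalC P = LSeries (fP P) := by
  funext s
  rw [LSeries, term_fP P hP, PvalC, ← tsum_subtype]

lemma summable_fP (P : Set ℕ) (hP : ∀ n ∈ P, 2 ≤ n) (s : ℂ) :
    LSeriesSummable (fP P) s ↔ Summable (fun n : P => ((n : ℕ) : ℂ) ^ (-s)) := by
  rw [LSeriesSummable, term_fP P hP, ← summable_subtype_iff_indicator]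
  rfl

lemma cast_rpow (n : ℕ) (x : ℝ) : (((n : ℝ) ^ (-x) : ℝ) : ℂ) = (n : ℂ) ^ (-(x : ℂ)) := by
  rw [Complex.ofReal_cpow (Nat.cast_nonneg n)]
  simp

lemma abscissa_lt (P : Set ℕ) (hP : ∀ n ∈ P, 2 ≤ n) (ρ : ℝ) (h : kappa P < (ρ : EReal)) :
    LSeries.abscissaOfAbsConv (fP P) < (ρ : EReal) := by
  obtain ⟨x, ⟨r, rfl, hr⟩, hx⟩ := sInf_lt_iff.1 h
  have : LSeriesSummable (fP P) (r : ℂ) := by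
    rw [summable_fP P hP]
    simp_rw [← cast_rpow]
    exact_mod_cast hr
  exact lt_of_le_of_lt (by simpa using this.abscissaOfAbsConv_le) hx

/-- lattice argument -/
lemma lattice (P : Set ℕ) (hP : ∀ n ∈ P, 2 ≤ n) (hne : P.Nonempty) (c : ℝ)
    (h : ∀ n ∈ P, ∃ k : ℤ, Real.log n = c * k) :
    ∃ d : ℕ, 2 ≤ d ∧ P ⊆ {n : ℕ | ∃ k : ℕ, 1 ≤ k ∧ n = d ^ k} := by
  have hc : c ≠ 0 := by
    rintro rfl
    obtain ⟨n, hn⟩ := hne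
    obtain ⟨k, hk⟩ := h n hn
    have : 0 < Real.log n := Real.log_pos (by exact_mod_cast hP n hn)
    simp at hk
    have := hP n hn
    rcases hk with h | h | h <;> first | omega | (norm_cast at h)
  wlog hcpos : 0 < c generalizing c
  · refine this (-c) (fun n hn => ?_) (by simpa using hc) ?_
    · obtain ⟨k, hk⟩ := h n hn
      exact ⟨-k, by rw [hk]; push_cast; ring⟩
    · have : c < 0 := lt_of_le_of_ne (not_lt.1 hcpos) hc
      linarith
  let H : AddSubgroup ℤ :=
    { carrier := {k | ∃ q : ℚ, Real.exp (c * k) = q}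
      zero_mem' := ⟨1, by simp⟩
      add_mem' := by
        rintro a b ⟨p, hp⟩ ⟨q, hq⟩
        exact ⟨p * q, by push_cast; rw [mul_add, Real.exp_add, hp, hq]⟩
      neg_mem' := by
        rintro a ⟨p, hp⟩
        exact ⟨p⁻¹, by push_cast; rw [mul_neg, Real.exp_neg, hp]⟩ }
  have hH : ∀ k : ℤ, k ∈ H ↔ ∃ q : ℚ, Real.exp (c * k) = q := fun k => Iff.rfl
  obtain ⟨g, hg⟩ := Int.subgroup_cyclic H
  have key : ∃ g : ℕ, (g : ℤ) ∈ H ∧ ∀ k ∈ H, (g : ℤ) ∣ k := by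
    refine ⟨g.natAbs, ?_, fun k hk => ?_⟩
    · have : g ∈ H := by rw [hg]; exact AddSubgroup.subset_closure rfl
      rcases Int.natAbs_eq g with e | e
      · rwa [← e]
      · rw [e] at this; simpa using H.neg_mem this
    · rw [hg, AddSubgroup.mem_closure_singleton] at hk
      obtain ⟨m, rfl⟩ := hk
      rw [Int.natAbs_dvd]
      simp
  clear hg
  obtain ⟨g, hgH, hgd⟩ := key
  obtain ⟨q, hq⟩ := (hH _).1 hgH
  have hqpos : (0 : ℝ) < q := by rw [← hq]; exact Real.exp_pos _
  have main : ∀ n ∈ P, ∃ k : ℕ, 1 ≤ k ∧ (n : ℚ) = q ^ k := by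
    intro n hn
    have hn2 := hP n hn
    have hn0 : (0 : ℝ) < n := by exact_mod_cast (by omega : 0 < n)
    obtain ⟨k, hk⟩ := h n hn
    have hkH : k ∈ H := ⟨n, by rw [← hk, Real.exp_log hn0]; simp⟩
    have hlog : 0 < Real.log n := Real.log_pos (by exact_mod_cast hP n hn)
    have hkpos : 0 < k := by
      rw [hk] at hlog
      exact_mod_cast (pos_iff_pos_of_mul_pos hlog).1 hcpos
    obtain ⟨m, rfl⟩ := hgd k hkH
    have hmpos : 0 < m := by
      by_contra hm
      have : (g : ℤ) * m ≤ 0 := mul_nonpos_of_nonneg_of_nonpos (by positivity) (by omega)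
      omega
    lift m to ℕ using hmpos.le
    refine ⟨m, by omega, ?_⟩
    have : (n : ℝ) = (q : ℝ) ^ m := by
      rw [← hq, ← Real.exp_nat_mul, ← Real.exp_log hn0, hk]
      congr 1
      push_cast
      ring
    exact_mod_cast this
  obtain ⟨n0, hn0⟩ := hne
  obtain ⟨k0, hk0, e0⟩ := main n0 hn0
  have hint : IsIntegral ℤ q := by
    refine IsIntegral.of_pow (n := k0) (by omega) ?_
    rw [← e0]
    exact_mod_cast isIntegral_algebraMap (R := ℤ) (A := ℚ) (x := (n0 : ℤ))
  obtain ⟨z, hz⟩ := IsIntegrallyClosed.isIntegral_iff.1 hint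
  have hz' : q = (z : ℚ) := by simpa using hz.symm
  subst hz'
  have hzpos : 0 < z := by exact_mod_cast hqpos
  lift z to ℕ using hzpos.le
  have main' : ∀ n ∈ P, ∃ k : ℕ, 1 ≤ k ∧ n = z ^ k := by
    intro n hn
    obtain ⟨k, hk, e⟩ := main n hn
    exact ⟨k, hk, by exact_mod_cast e⟩
  refine ⟨z, ?_, main'⟩
  obtain ⟨k, hk, e⟩ := main' n0 hn0
  have := hP n0 hn0
  by_contra hlt
  have : z = 1 := by omega
  subst this
  simp at e
  omega

lemma PvalC_ne_one (P : Set ℕ) (hP : ∀ n ∈ P, 2 ≤ n) (hne : P.Nonempty)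
    (ρ : ℝ) (hρκ : kappa P < (ρ : EReal)) (hρ1 : Pval P ρ = 1)
    (hnp : ∀ d : ℕ, 2 ≤ d → ¬ P ⊆ {n : ℕ | ∃ k : ℕ, 1 ≤ k ∧ n = d ^ k})
    (s : ℂ) (hs : ρ ≤ s.re) (hsρ : s ≠ ρ) : PvalC P s ≠ 1 := by
  intro hone
  have hab := abscissa_lt P hP ρ hρκ
  have hsum : Summable (fun n : P => ((n : ℕ) : ℂ) ^ (-s)) := by
    rw [← summable_fP P hP]
    exact LSeriesSummable_of_abscissaOfAbsConv_lt_re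
      (lt_of_lt_of_le hab (by exact_mod_cast hs))
  have hsumρ : Summable (fun n : P => ((n : ℕ) : ℝ) ^ (-ρ)) := by
    have : Summable (fun n : P => ((n : ℕ) : ℂ) ^ (-(ρ : ℂ))) := by
      rw [← summable_fP P hP]
      exact LSeriesSummable_of_abscissaOfAbsConv_lt_re (by simpa using hab)
    simp_rw [← cast_rpow] at this
    exact_mod_cast this
  have hre : HasSum (fun n : P => (((n : ℕ) : ℂ) ^ (-s)).re) 1 := by
    have := Complex.hasSum_re hsum.hasSum
    rw [PvalC] at hone
    rwa [hone, Complex.one_re] at this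
  have hρ : HasSum (fun n : P => ((n : ℕ) : ℝ) ^ (-ρ)) 1 := by
    rw [← hρ1]; exact hsumρ.hasSum
  have hnorm : ∀ n : P, ‖((n : ℕ) : ℂ) ^ (-s)‖ ≤ ((n : ℕ) : ℝ) ^ (-ρ) := by
    intro n
    have := hP n n.2
    rw [Complex.norm_natCast_cpow_of_pos (by omega)]
    apply Real.rpow_le_rpow_of_exponent_le
    · exact_mod_cast (by omega : 1 ≤ (n : ℕ))
    · simpa using hs
  have hle : ∀ n : P, (((n : ℕ) : ℂ) ^ (-s)).re ≤ ((n : ℕ) : ℝ) ^ (-ρ) := fun n =>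
    (Complex.re_le_norm _).trans (hnorm n)
  have heq : ∀ n : P, (((n : ℕ) : ℂ) ^ (-s)).re = ((n : ℕ) : ℝ) ^ (-ρ) := by
    intro n
    by_contra hcon
    exact lt_irrefl _ (hasSum_lt hle (lt_of_le_of_ne (hle n) hcon) hre hρ)
  have hval : ∀ n : P, ((n : ℕ) : ℂ) ^ (-s) = ((n : ℕ) : ℂ) ^ (-(ρ : ℂ)) := by
    intro n
    have h1 : (((n : ℕ) : ℂ) ^ (-s)).re = ‖((n : ℕ) : ℂ) ^ (-s)‖ :=
      le_antisymm (Complex.re_le_norm _) ((hnorm n).trans (heq n).ge)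
    have h2 := Complex.re_eq_norm.1 h1
    rw [← cast_rpow, ← heq n]
    exact Complex.ext (by simp) (by simpa using (Complex.nonneg_iff.1 h2).2.symm)
  have hex : ∀ n ∈ P, ∃ k : ℤ, (ρ - s) * (Real.log n : ℝ) = k * (2 * Real.pi * Complex.I) := by
    intro n hn
    have h2 := hP n hn
    have hn0 : (n : ℂ) ≠ 0 := by exact_mod_cast (by omega : n ≠ 0)
    have := hval ⟨n, hn⟩
    simp only at this
    rw [Complex.cpow_def_of_ne_zero hn0, Complex.cpow_def_of_ne_zero hn0,
      Complex.exp_eq_exp_iff_exists_int] at this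
    obtain ⟨k, hk⟩ := this
    refine ⟨k, ?_⟩
    rw [← Complex.natCast_log] at hk
    linear_combination hk
  have him : s.im ≠ 0 := by
    intro h0
    obtain ⟨n, hn⟩ := hne
    obtain ⟨k, hk⟩ := hex n hn
    have hlog : 0 < Real.log n := Real.log_pos (by exact_mod_cast hP n hn)
    have := congrArg Complex.re hk
    simp [-Complex.natCast_log] at this
    rcases this with h | h
    · exact hsρ (Complex.ext (by simp; linarith) (by simpa using h0))
    · have := hP n hn
      rcases h with h | h | h <;> first | omega | (norm_cast at h)
  obtain ⟨d, hd, hsub⟩ := lattice P hP hne (-(2 * Real.pi / s.im)) (by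
    intro n hn
    obtain ⟨k, hk⟩ := hex n hn
    refine ⟨k, ?_⟩
    have := congrArg Complex.im hk
    simp [-Complex.natCast_log] at this
    field_simp
    linarith)
  exact hnp d hd hsub

/-- **No zeros of `1 - 𝒫` on the line `Re s = ρ` except `s = ρ`, and the simple pole of
`𝒜(s) = 1/(1 - 𝒫(s))`.** Under the non-periodicity condition, `𝒫(s) ≠ 1` for `Re s = ρ`,
`s ≠ ρ`; `𝒜` is analytic at every point of the closed half-plane `Re s ≥ ρ` other than
`ρ`; and at `ρ` it has a simple pole with `𝒜(s) ∼ -1/(𝒫'(ρ)(s - ρ))` as `s → ρ`. -/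
theorem A_analytic_simple_pole
    (P : Set ℕ) (hP : ∀ n ∈ P, 2 ≤ n) (hP2 : P.Nontrivial)
    (hκ : 1 < PvalE P (kappa P))
    (ρ : ℝ) (hρ0 : 0 < ρ) (hρκ : kappa P < (ρ : EReal)) (hρ1 : Pval P ρ = 1)
    (hnp : ∀ d : ℕ, 2 ≤ d → ¬ P ⊆ {n : ℕ | ∃ k : ℕ, 1 ≤ k ∧ n = d ^ k}) :
    (∀ s : ℂ, s.re = ρ → s ≠ (ρ : ℂ) → PvalC P s ≠ 1) ∧
    (∀ s : ℂ, ρ ≤ s.re → s ≠ (ρ : ℂ) →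
      AnalyticAt ℂ (fun w : ℂ => 1 / (1 - PvalC P w)) s) ∧
    Pderiv1 P ρ ≠ 0 ∧
    Tendsto (fun s : ℂ => (s - (ρ : ℂ)) * (1 / (1 - PvalC P s)))
      (nhdsWithin (ρ : ℂ) {(ρ : ℂ)}ᶜ)
      (nhds (-1 / (Pderiv1 P ρ : ℂ))) := by
  have hab := abscissa_lt P hP ρ hρκ
  have hne := PvalC_ne_one P hP hP2.nonempty ρ hρκ hρ1 hnp
  have habc : LSeries.abscissaOfAbsConv (fP P) < ((ρ : ℂ).re : EReal) := by simpa using hab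
  have hlogsum : Summable (fun n : P => ((n : ℕ) : ℝ) ^ (-ρ) * Real.log (n : ℕ)) := by
    have := LSeriesSummable_logMul_of_lt_re habc
    rw [LSeriesSummable, term_log_fP P hP, ← summable_subtype_iff_indicator] at this
    have h2 : Summable (fun n : P => ((((n : ℕ) : ℝ) ^ (-ρ) * Real.log (n : ℕ) : ℝ) : ℂ)) := by
      refine this.congr fun n => ?_
      simp only [Function.comp]
      rw [Complex.ofReal_mul, cast_rpow, Complex.natCast_log]
    exact_mod_cast h2
  have hder : (Pderiv1 P ρ : ℂ) = - LSeries (LSeries.logMul (fP P)) ρ := by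
    rw [LSeries, term_log_fP P hP, ← tsum_subtype, Pderiv1, Complex.ofReal_neg, Complex.ofReal_tsum]
    congr 1
    refine tsum_congr fun n => ?_
    rw [Complex.ofReal_mul, cast_rpow, Complex.natCast_log]
  have hpos : ∀ n : P, 0 < ((n : ℕ) : ℝ) ^ (-ρ) * Real.log (n : ℕ) := by
    intro n
    have h2 := hP n n.2
    have : 0 < Real.log (n : ℕ) := Real.log_pos (by exact_mod_cast h2)
    have : (0 : ℝ) < (n : ℕ) := by exact_mod_cast (by omega : 0 < (n : ℕ))
    positivity
  have hd0 : Pderiv1 P ρ ≠ 0 := by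
    obtain ⟨n, hn⟩ := hP2.nonempty
    have := hlogsum.tsum_pos (fun n => (hpos n).le) ⟨n, hn⟩ (hpos _)
    rw [Pderiv1]
    exact neg_ne_zero.2 this.ne'
  refine ⟨fun s hs => hne s hs.ge, fun s hs hsρ => ?_, hd0, ?_⟩
  · have h1 : AnalyticAt ℂ (PvalC P) s := by
      rw [PvalC_eq P hP]
      exact LSeries_analyticOnNhd _ s (lt_of_lt_of_le hab (by exact_mod_cast hs))
    exact analyticAt_const.div (analyticAt_const.sub h1) (sub_ne_zero.2 (hne s hs hsρ).symm)
  · have hD : HasDerivAt (PvalC P) (Pderiv1 P ρ : ℂ) (ρ : ℂ) := by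
      rw [hder, PvalC_eq P hP]
      exact LSeries_hasDerivAt habc
    have hv : PvalC P ρ = 1 := by
      have : PvalC P ρ = (Pval P ρ : ℂ) := by
        rw [PvalC, Pval, Complex.ofReal_tsum]
        exact tsum_congr fun n => (cast_rpow _ _).symm
      rw [this, hρ1, Complex.ofReal_one]
    have hT := (hasDerivAt_iff_tendsto_slope.1 hD).inv₀ (by exact_mod_cast hd0)
    have hT2 := hT.neg
    rw [show (-1 / (Pderiv1 P ρ : ℂ)) = -(Pderiv1 P ρ : ℂ)⁻¹ by ring]
    refine hT2.congr fun s => ?_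
    rw [slope_def_field, hv, inv_div, ← neg_sub (PvalC P s) 1, div_neg, mul_neg, mul_one_div]
end
end

section
/- For Re(s) > ρ, the Dirichlet series M_k(s) = Σ_{n≥1} b_k(n) n^{−s} converge absolutely for all k ≥ 0 and satisfy M_0(s) = 1/(1 − 𝒫(s)) and, for every k ≥ 1, the recurrence M_k(s) = (1/(1 − 𝒫(s))) Σ_{0≤j<k} C(k,j) M_j(s) B_{k−j}(s), where B_k(s) = Σ_{0≤ℓ≤k} C(k,ℓ) μ^{ℓ} 𝒫^{(ℓ)}(s) and C(k,j) denotes the binomial coefficient. -/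
open scoped BigOperators ENNReal
open Filter Asymptotics

noncomputable section

/-- `b_k(n) = Σ_{m ≥ 0} a_m(n) (m - μ log n)^k`. -/
def bCoef (P : Set ℕ) (μ : ℝ) (k n : ℕ) : ℝ :=
  ∑' m : ℕ, (af P m n : ℝ) * ((m : ℝ) - μ * Real.log n) ^ k

/-- The `ℓ`-th derivative `𝒫^{(ℓ)}(s) = (-1)^ℓ Σ_{n ∈ 𝒫} (log n)^ℓ n^{-s}`. -/
def PdC (P : Set ℕ) (ℓ : ℕ) (s : ℂ) : ℂ :=
  (-1) ^ ℓ * ∑' n : P, ((Real.log (n : ℕ) : ℂ)) ^ ℓ * ((n : ℕ) : ℂ) ^ (-s)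

/-- `M_k(s) = Σ_{n ≥ 1} b_k(n) n^{-s}`. -/
def Mser (P : Set ℕ) (μ : ℝ) (k : ℕ) (s : ℂ) : ℂ :=
  ∑' n : ℕ, (bCoef P μ k n : ℂ) * (n : ℂ) ^ (-s)

/-- `B_k(s) = Σ_{0 ≤ ℓ ≤ k} C(k,ℓ) μ^ℓ 𝒫^{(ℓ)}(s)`. -/
def Bser (P : Set ℕ) (μ : ℝ) (k : ℕ) (s : ℂ) : ℂ :=
  ∑ ℓ ∈ Finset.range (k + 1), (k.choose ℓ : ℂ) * (μ : ℂ) ^ ℓ * PdC P ℓ s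


theorem aux_log_bound (k : ℕ) (δ : ℝ) (hδ : 0 < δ) :
    ∃ C : ℝ, 0 ≤ C ∧ ∀ x : ℝ, 1 ≤ x → (Real.log x) ^ k ≤ C * x ^ δ := by
  set ε := δ / (k + 1) with hε
  have hε0 : 0 < ε := by positivity
  refine ⟨(1 / ε) ^ k, by positivity, fun x hx => ?_⟩
  have h1 := Real.log_le_rpow_div (by linarith : (0:ℝ) ≤ x) hε0
  have h2 : (Real.log x) ^ k ≤ (x ^ ε / ε) ^ k := pow_le_pow_left₀ (Real.log_nonneg hx) h1 k
  refine h2.trans ?_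
  rw [div_eq_mul_one_div, mul_pow, mul_comm, ← Real.rpow_mul_natCast (by linarith)]
  gcongr
  · rw [hε, div_mul_eq_mul_div, div_le_iff₀ (by positivity)]
    nlinarith

theorem aux_tsum_pow {α : Type*} (f : α → ℝ≥0∞) (m : ℕ) :
    ∑' t : Fin m → α, ∏ i, f (t i) = (∑' a, f a) ^ m := by
  induction m with
  | zero => simp
  | succ m ih =>
    rw [← (Fin.consEquiv (fun _ => α)).tsum_eq, ENNReal.tsum_prod']
    simp only [Fin.consEquiv, Equiv.coe_fn_mk, Fin.prod_univ_succ, Fin.cons_zero, Fin.cons_succ]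
    simp_rw [ENNReal.tsum_mul_left, ih, ENNReal.tsum_mul_right]
    ring

theorem aux_summable {α : Type*} (f : α → ℝ) (hf0 : ∀ a, 0 ≤ f a) (hf : Summable f)
    (h1 : ∑' a, f a < 1) :
    Summable (fun t : Σ m : ℕ, (Fin m → α) => ∏ i, f (t.2 i)) := by
  have h0 : ∀ t : Σ m : ℕ, (Fin m → α), 0 ≤ ∏ i, f (t.2 i) :=
    fun t => Finset.prod_nonneg fun i _ => hf0 _
  have key : ∑' t : Σ m : ℕ, (Fin m → α), ENNReal.ofReal (∏ i, f (t.2 i)) ≠ ⊤ := by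
    rw [ENNReal.tsum_sigma']
    have : ∀ m : ℕ, ∑' t : Fin m → α, ENNReal.ofReal (∏ i, f (t i))
        = (∑' a, ENNReal.ofReal (f a)) ^ m := by
      intro m
      rw [← aux_tsum_pow]
      refine tsum_congr fun t => ?_
      rw [ENNReal.ofReal_prod_of_nonneg fun i _ => hf0 _]
    simp only [this]
    rw [ENNReal.tsum_geometric, ← ENNReal.ofReal_tsum_of_nonneg hf0 hf]
    refine ENNReal.inv_ne_top.2 ?_
    rw [ne_eq, tsub_eq_zero_iff_le, not_le]
    rw [← ENNReal.ofReal_one]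
    exact (ENNReal.ofReal_lt_ofReal_iff one_pos).2 h1
  have := ENNReal.summable_toReal key
  refine this.congr fun t => ?_
  rw [ENNReal.toReal_ofReal (h0 t)]

/-- product of a tuple -/
def tprd {P : Set ℕ} (t : Σ m : ℕ, (Fin m → P)) : ℕ := ∏ i, (t.2 i : ℕ)

/-- term of the sum over tuples -/
def tF {P : Set ℕ} (μ : ℝ) (k : ℕ) (s : ℂ) (t : Σ m : ℕ, (Fin m → P)) : ℂ :=
  (((t.1 : ℝ) - μ * Real.log (tprd t) : ℝ) : ℂ) ^ k * (tprd t : ℂ) ^ (-s)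

theorem aux_tprd_le {P : Set ℕ} (hP : ∀ n ∈ P, 2 ≤ n) (t : Σ m : ℕ, (Fin m → P)) :
    2 ^ t.1 ≤ tprd t := by
  have := Finset.prod_le_prod' (s := Finset.univ) (f := fun _ : Fin t.1 => 2)
    (g := fun i => (t.2 i : ℕ)) (fun i _ => hP _ (t.2 i).2)
  simpa [tprd] using this

theorem aux_summable_P {P : Set ℕ} (hP : ∀ n ∈ P, 2 ≤ n)
    (ρ : ℝ) (hρ1 : Pval P ρ = 1) (σ : ℝ) (hσ : ρ < σ) :
    Summable (fun n : P => ((n : ℕ) : ℝ) ^ (-σ)) ∧ ∑' n : P, ((n : ℕ) : ℝ) ^ (-σ) < 1 := by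
  have hs : Summable (fun n : P => ((n : ℕ) : ℝ) ^ (-ρ)) := by
    by_contra h
    rw [Pval, tsum_eq_zero_of_not_summable h] at hρ1
    exact zero_ne_one hρ1
  have hb : ∀ n : P, ((n : ℕ) : ℝ) ^ (-σ) ≤ (2:ℝ) ^ (-(σ - ρ)) * ((n : ℕ) : ℝ) ^ (-ρ) := by
    intro n
    have h2 : (2:ℝ) ≤ ((n : ℕ) : ℝ) := by exact_mod_cast hP _ n.2
    have : -σ = -(σ - ρ) + -ρ := by ring
    rw [this, Real.rpow_add (by linarith)]
    refine mul_le_mul_of_nonneg_right ?_ (by positivity)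
    exact Real.rpow_le_rpow_of_nonpos (by norm_num) h2 (by linarith)
  have hs2 := Summable.of_nonneg_of_le (fun n => by positivity) hb (hs.mul_left _)
  refine ⟨hs2, (hs2.tsum_le_tsum hb (hs.mul_left _)).trans_lt ?_⟩
  rw [tsum_mul_left]
  change _ * Pval P ρ < 1
  rw [hρ1, mul_one]
  exact Real.rpow_lt_one_of_one_lt_of_neg (by norm_num) (by linarith)

theorem aux_summable_log {P : Set ℕ} (hP : ∀ n ∈ P, 2 ≤ n)
    (ρ : ℝ) (hρ1 : Pval P ρ = 1) (s : ℂ) (hs : ρ < s.re) (ℓ : ℕ) :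
    Summable (fun n : P => ((Real.log (n : ℕ) : ℂ)) ^ ℓ * ((n : ℕ) : ℂ) ^ (-s)) := by
  obtain ⟨σ, h1, h2⟩ := exists_between hs
  obtain ⟨C, hC, hb⟩ := aux_log_bound ℓ (s.re - σ) (by linarith)
  refine Summable.of_norm_bounded ((aux_summable_P hP ρ hρ1 σ h1).1.mul_left C) fun n => ?_
  have hn : (1:ℝ) ≤ ((n : ℕ) : ℝ) := by exact_mod_cast (by norm_num : 1 ≤ 2).trans (hP _ n.2)
  have hn' : 0 < (n : ℕ) := by exact_mod_cast (by linarith : (0:ℝ) < ((n : ℕ) : ℝ))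
  rw [norm_mul, norm_pow, Complex.norm_real, Real.norm_of_nonneg (Real.log_nonneg hn),
    Complex.norm_natCast_cpow_of_pos hn', Complex.neg_re]
  calc _ ≤ (C * ((n : ℕ) : ℝ) ^ (s.re - σ)) * ((n : ℕ) : ℝ) ^ (-s.re) := by
        gcongr; exact hb _ hn
    _ = _ := by
        rw [mul_assoc, ← Real.rpow_add (by linarith)]
        congr 2; ring

theorem aux_summable_tF {P : Set ℕ} (hP : ∀ n ∈ P, 2 ≤ n)
    (ρ : ℝ) (hρ1 : Pval P ρ = 1) (μ : ℝ) (s : ℂ) (hs : ρ < s.re) (k : ℕ) :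
    Summable (tF (P := P) μ k s) := by
  obtain ⟨σ, h1, h2⟩ := exists_between hs
  obtain ⟨C, hC, hb⟩ := aux_log_bound k (s.re - σ) (by linarith)
  have hP' := aux_summable_P hP ρ hρ1 σ h1
  have hS := aux_summable (fun n : P => ((n : ℕ) : ℝ) ^ (-σ)) (fun n => by positivity)
    hP'.1 hP'.2
  set D : ℝ := 1 / Real.log 2 + |μ| with hD
  have hl2 : 0 < Real.log 2 := Real.log_pos (by norm_num)
  refine Summable.of_norm_bounded (hS.mul_left (D ^ k * C)) fun t => ?_
  have hle := aux_tprd_le hP t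
  have hn' : 0 < tprd t := lt_of_lt_of_le (by positivity) hle
  have hn : (1:ℝ) ≤ (tprd t : ℝ) := by exact_mod_cast hn'
  have hlog := Real.log_nonneg hn
  have hm : (t.1 : ℝ) ≤ 1 / Real.log 2 * Real.log (tprd t) := by
    have : Real.log ((2:ℝ) ^ t.1) ≤ Real.log (tprd t) :=
      Real.log_le_log (by positivity) (by exact_mod_cast hle)
    rw [Real.log_pow] at this
    rw [one_div_mul_eq_div, le_div_iff₀ hl2]
    exact this
  have habs : |(t.1 : ℝ) - μ * Real.log (tprd t)| ≤ D * Real.log (tprd t) := by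
    refine (abs_sub _ _).trans ?_
    rw [abs_mul, abs_of_nonneg hlog, abs_of_nonneg (Nat.cast_nonneg _), hD, add_mul]
    gcongr
  have hprod : ∏ i, (((t.2 i : P) : ℕ) : ℝ) ^ (-σ) = (tprd t : ℝ) ^ (-σ) := by
    rw [tprd, Nat.cast_prod, Real.finsetProd_rpow _ _ (fun i _ => by positivity)]
  rw [hprod, tF, norm_mul, norm_pow, Complex.norm_real, Real.norm_eq_abs,
    Complex.norm_natCast_cpow_of_pos hn', Complex.neg_re]
  calc _ ≤ (D * Real.log (tprd t)) ^ k * (tprd t : ℝ) ^ (-s.re) := by gcongr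
    _ ≤ (D ^ k * (C * (tprd t : ℝ) ^ (s.re - σ))) * (tprd t : ℝ) ^ (-s.re) := by
        rw [mul_pow]
        gcongr
        exact hb _ hn
    _ = _ := by
        rw [mul_assoc, mul_assoc, mul_assoc, ← Real.rpow_add (by linarith)]
        congr 3; ring

theorem aux_fiber {P : Set ℕ} (μ : ℝ) (k : ℕ) (s : ℂ) (q : ℕ × ℕ) :
    ∑' t : (fun t : Σ m : ℕ, (Fin m → P) => (t.1, tprd t)) ⁻¹' {q}, tF μ k s t.1
      = (((af P q.1 q.2 : ℝ) * ((q.1 : ℝ) - μ * Real.log q.2) ^ k : ℝ) : ℂ)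
        * (q.2 : ℂ) ^ (-s) := by
  obtain ⟨m, n⟩ := q
  have h : ∀ t : (fun t : Σ m : ℕ, (Fin m → P) => (t.1, tprd t)) ⁻¹' {(m, n)},
      tF μ k s t.1 = (((m : ℝ) - μ * Real.log n : ℝ) : ℂ) ^ k * (n : ℂ) ^ (-s) := by
    rintro ⟨t, ht⟩
    simp only [Set.mem_preimage, Set.mem_singleton_iff, Prod.mk.injEq] at ht
    rw [tF, ht.1, ht.2]
  rw [tsum_congr h, tsum_const]
  have hc : Nat.card ((fun t : Σ m : ℕ, (Fin m → P) => (t.1, tprd t)) ⁻¹' {(m, n)})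
      = af P m n := by
    rw [af]
    symm
    refine Nat.card_congr (Equiv.ofBijective
      (fun t => ⟨⟨m, fun i => ⟨t.1 i, t.2.1 i⟩⟩, by simp [tprd, t.2.2]⟩) ⟨?_, ?_⟩)
    · rintro ⟨t, ht⟩ ⟨u, hu⟩ h
      have h' := eq_of_heq (Sigma.mk.inj (congrArg Subtype.val h)).2
      apply Subtype.ext
      funext i
      exact congrArg Subtype.val (congrFun h' i)
    · rintro ⟨⟨m', t⟩, ht⟩
      simp only [Set.mem_preimage, Set.mem_singleton_iff, Prod.mk.injEq] at ht
      obtain ⟨rfl, h2⟩ := ht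
      exact ⟨⟨fun i => (t i : ℕ), fun i => (t i).2, h2⟩, rfl⟩
  rw [hc, nsmul_eq_mul]
  push_cast
  ring

theorem aux_Mser {P : Set ℕ} (hP : ∀ n ∈ P, 2 ≤ n)
    (ρ : ℝ) (hρ1 : Pval P ρ = 1) (μ : ℝ) (s : ℂ) (hs : ρ < s.re) (k : ℕ) :
    Summable (fun n : ℕ => (bCoef P μ k n : ℂ) * (n : ℂ) ^ (-s)) ∧
      Mser P μ k s = ∑' t, tF (P := P) μ k s t := by
  have hS := aux_summable_tF hP ρ hρ1 μ s hs k
  have h1 := hS.hasSum.tsum_fiberwise (fun t : Σ m : ℕ, (Fin m → P) => (t.1, tprd t))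
  simp only [aux_fiber] at h1
  have hb : ∀ n : ℕ, (bCoef P μ k n : ℂ) * (n : ℂ) ^ (-s) = ∑' m : ℕ,
      (((af P m n : ℝ) * ((m : ℝ) - μ * Real.log n) ^ k : ℝ) : ℂ) * (n : ℂ) ^ (-s) := by
    intro n
    rw [tsum_mul_right, bCoef, Complex.ofReal_tsum]
  have h2 := (Equiv.prodComm ℕ ℕ).hasSum_iff.2 h1
  have h3 := h2.summable.prod
  refine ⟨h3.congr fun n => ?_, ?_⟩
  · rw [hb]; rfl
  · rw [Mser, ← h2.tsum_eq, h2.summable.tsum_prod]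
    refine tsum_congr fun n => ?_
    rw [hb]; rfl

theorem aux_Bser {P : Set ℕ} (hP : ∀ n ∈ P, 2 ≤ n)
    (ρ : ℝ) (hρ1 : Pval P ρ = 1) (μ : ℝ) (s : ℂ) (hs : ρ < s.re) (k : ℕ) :
    HasSum (fun n : P => ((1 - μ * Real.log (n : ℕ) : ℝ) : ℂ) ^ k * ((n : ℕ) : ℂ) ^ (-s))
      (Bser P μ k s) := by
  have h : ∀ ℓ ∈ Finset.range (k + 1), HasSum (fun n : P => (k.choose ℓ : ℂ) * (μ : ℂ) ^ ℓ *
      ((-1) ^ ℓ * (((Real.log (n : ℕ) : ℂ)) ^ ℓ * ((n : ℕ) : ℂ) ^ (-s))))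
      ((k.choose ℓ : ℂ) * (μ : ℂ) ^ ℓ * PdC P ℓ s) := fun ℓ _ =>
    ((aux_summable_log hP ρ hρ1 s hs ℓ).hasSum.mul_left _).mul_left _
  refine (hasSum_sum h).congr_fun ?_
  intro n
  push_cast
  rw [sub_eq_neg_add, add_pow, Finset.sum_mul]
  refine Finset.sum_congr rfl fun ℓ _ => ?_
  rw [neg_pow, mul_pow]
  ring

theorem aux_mul {α β : Type*} {f : α → ℂ} {g : β → ℂ} {a b : ℂ} (hf : HasSum f a)
    (hg : HasSum g b) : HasSum (fun q : α × β => f q.1 * g q.2) (a * b) :=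
  hf.mul hg (summable_mul_of_summable_norm hf.summable.norm hg.summable.norm)

theorem aux_step {P : Set ℕ} (hP : ∀ n ∈ P, 2 ≤ n)
    (ρ : ℝ) (hρ1 : Pval P ρ = 1) (μ : ℝ) (s : ℂ) (hs : ρ < s.re) (k m : ℕ) :
    ∑' t : Fin (m + 1) → P, tF μ k s ⟨m + 1, t⟩ = ∑ j ∈ Finset.range (k + 1),
      (k.choose j : ℂ) * (∑' t : Fin m → P, tF μ j s ⟨m, t⟩) * Bser P μ (k - j) s := by
  rw [← (Fin.consEquiv (fun _ => P)).tsum_eq]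
  have hS : ∀ j, Summable (fun t : Fin m → P => tF μ j s ⟨m, t⟩) := fun j =>
    (aux_summable_tF hP ρ hρ1 μ s hs j).sigma_factor m
  have hB := aux_Bser hP ρ hρ1 μ s hs
  have h : ∀ j ∈ Finset.range (k + 1), HasSum (fun q : P × (Fin m → P) => (k.choose j : ℂ) *
      ((((1 - μ * Real.log (q.1 : ℕ) : ℝ) : ℂ) ^ (k - j) * ((q.1 : ℕ) : ℂ) ^ (-s)) *
        tF μ j s ⟨m, q.2⟩))
      ((k.choose j : ℂ) * (∑' t : Fin m → P, tF μ j s ⟨m, t⟩) * Bser P μ (k - j) s) := by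
    intro j _
    have h1 := aux_mul (hB (k - j)) (hS j).hasSum
    have h2 := h1.mul_left (k.choose j : ℂ)
    rw [mul_assoc, mul_comm (∑' t : Fin m → P, tF μ j s ⟨m, t⟩)]
    exact h2
  refine HasSum.tsum_eq ?_
  refine (hasSum_sum h).congr_fun ?_
  rintro ⟨p, t⟩
  have hp : ((p : ℕ) : ℝ) ≠ 0 := by
    have := hP _ p.2
    exact_mod_cast (by omega : (p : ℕ) ≠ 0)
  have ht : ((tprd ⟨m, t⟩ : ℕ) : ℝ) ≠ 0 := by
    have := aux_tprd_le hP ⟨m, t⟩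
    have h2 : 0 < 2 ^ m := by positivity
    exact_mod_cast (lt_of_lt_of_le h2 this).ne'
  have hc : tprd ⟨m + 1, Fin.consEquiv (fun _ => P) (p, t)⟩ = (p : ℕ) * tprd ⟨m, t⟩ := by
    simp [tprd, Fin.consEquiv, Fin.prod_univ_succ]
  have hx : (((m + 1 : ℕ) : ℝ) - μ * Real.log (tprd ⟨m + 1, Fin.consEquiv (fun _ => P) (p, t)⟩))
      = ((m : ℝ) - μ * Real.log (tprd ⟨m, t⟩)) + (1 - μ * Real.log (p : ℕ)) := by
    rw [hc]; push_cast
    rw [Real.log_mul hp ht]; ring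
  unfold tF
  dsimp only
  rw [hx, hc, Complex.ofReal_add, add_pow, Nat.cast_mul, Complex.natCast_mul_natCast_cpow,
    Finset.sum_mul]
  refine Finset.sum_congr rfl fun j _ => ?_
  ring

theorem aux_rec {P : Set ℕ} (hP : ∀ n ∈ P, 2 ≤ n)
    (ρ : ℝ) (hρ1 : Pval P ρ = 1) (μ : ℝ) (s : ℂ) (hs : ρ < s.re) (k : ℕ) :
    Mser P μ k s = 0 ^ k + ∑ j ∈ Finset.range (k + 1),
      (k.choose j : ℂ) * Mser P μ j s * Bser P μ (k - j) s := by
  have hS := aux_summable_tF hP ρ hρ1 μ s hs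
  have hM : ∀ k, HasSum (fun m : ℕ => ∑' t : Fin m → P, tF μ k s ⟨m, t⟩) (Mser P μ k s) := by
    intro k
    rw [(aux_Mser hP ρ hρ1 μ s hs k).2]
    exact (hS k).hasSum.sigma fun m => ((hS k).sigma_factor m).hasSum
  rw [← (hM k).tsum_eq, (hM k).summable.tsum_eq_zero_add]
  congr 1
  · rw [tsum_fintype]
    simp [tF, tprd]
  · simp only [aux_step hP ρ hρ1 μ s hs]
    exact (hasSum_sum fun j _ => ((hM j).mul_left _).mul_right _).tsum_eq

/-- **The Dirichlet series `M_k` and their recurrence.** For `Re s > ρ` all the series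
`M_k(s)` converge absolutely, `M_0(s) = 1/(1 - 𝒫(s))`, and for `k ≥ 1`,
`M_k(s) = (1/(1 - 𝒫(s))) Σ_{0 ≤ j < k} C(k,j) M_j(s) B_{k-j}(s)`. -/
theorem Mser_recurrence
    (P : Set ℕ) (hP : ∀ n ∈ P, 2 ≤ n) (hP2 : P.Nontrivial)
    (hκ : 1 < PvalE P (kappa P))
    (ρ : ℝ) (hρ0 : 0 < ρ) (hρκ : kappa P < (ρ : EReal)) (hρ1 : Pval P ρ = 1)
    (μ : ℝ) (hμ : μ = -1 / Pderiv1 P ρ) :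
    ∀ s : ℂ, ρ < s.re →
      (∀ k : ℕ, Summable (fun n : ℕ => ‖(bCoef P μ k n : ℂ) * (n : ℂ) ^ (-s)‖)) ∧
      Mser P μ 0 s = 1 / (1 - PvalC P s) ∧
      ∀ k : ℕ, 1 ≤ k →
        Mser P μ k s = (1 / (1 - PvalC P s)) *
          ∑ j ∈ Finset.range k, (k.choose j : ℂ) * Mser P μ j s * Bser P μ (k - j) s := by
  intro s hs
  have hrec := aux_rec hP ρ hρ1 μ s hs
  have hB0 : Bser P μ 0 s = PvalC P s := by simp [Bser, PdC, PvalC]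
  have h0 : Mser P μ 0 s * (1 - PvalC P s) = 1 := by
    have := hrec 0
    simp [hB0] at this
    linear_combination this
  have hne : 1 - PvalC P s ≠ 0 := right_ne_zero_of_mul_eq_one h0
  refine ⟨fun k => (aux_Mser hP ρ hρ1 μ s hs k).1.norm, ?_, fun k hk => ?_⟩
  · rw [eq_div_iff hne, h0]
  · have := hrec k
    rw [Finset.sum_range_succ, zero_pow (by omega), Nat.sub_self, hB0, Nat.choose_self] at this
    push_cast at this
    rw [one_div, eq_inv_mul_iff_mul_eq₀ hne]
    linear_combination this
end
end

section
/- Under the stated assumptions, for every k ≥ 0 the function M_k(s) extends analytically to the closed half-plane {s : Re(s) ≥ ρ} except at s = ρ, where it has a pole of order at most ⌊k/2⌋ + 1; moreover, for every even k ≥ 0, M_k(s) ∼ μ (σ²/2)^{k/2} k! · (s − ρ)^{−k/2−1} as s → ρ with Re(s) > ρ. -/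
open scoped BigOperators ENNReal
open Filter Asymptotics

noncomputable section

/-! ### Elementary growth bound -/

lemma log_pow_bound (A B ε : ℝ) (hA : 0 ≤ A) (hB : 0 ≤ B) (hε : 0 < ε) (j : ℕ) :
    ∃ C : ℝ, 0 ≤ C ∧ ∀ y : ℝ, 1 ≤ y → (A + B * Real.log y) ^ j ≤ C * y ^ ε := by
  set δ : ℝ := ε / (j + 1) with hδ
  have hj : (0 : ℝ) < j + 1 := by positivity
  have hδ0 : 0 < δ := by positivity
  refine ⟨(A + B / δ) ^ j, by positivity, fun y hy => ?_⟩
  have hy0 : (0 : ℝ) ≤ y := by linarith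
  have h1 : Real.log y ≤ y ^ δ / δ := Real.log_le_rpow_div hy0 hδ0
  have h2 : 1 ≤ y ^ δ := Real.one_le_rpow hy hδ0.le
  have h0 : 0 ≤ Real.log y := Real.log_nonneg hy
  have h3 : A + B * Real.log y ≤ (A + B / δ) * y ^ δ := by
    have : B * Real.log y ≤ B * (y ^ δ / δ) := mul_le_mul_of_nonneg_left h1 hB
    have h4 : A * 1 ≤ A * y ^ δ := mul_le_mul_of_nonneg_left h2 hA
    calc A + B * Real.log y ≤ A * y ^ δ + B * (y ^ δ / δ) := by linarith
      _ = _ := by ring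
  calc (A + B * Real.log y) ^ j ≤ ((A + B / δ) * y ^ δ) ^ j := by gcongr
    _ = (A + B / δ) ^ j * y ^ (δ * j) := by
        rw [mul_pow, ← Real.rpow_natCast (y ^ δ), ← Real.rpow_mul hy0]
    _ ≤ (A + B / δ) ^ j * y ^ ε := by
        gcongr
        rw [hδ, div_mul_eq_mul_div, div_le_iff₀ hj]; nlinarith

/-! ### The building blocks -/

def Qser (P : Set ℕ) (μ : ℝ) (j : ℕ) (s : ℂ) : ℂ :=
  ∑' p : P, ((1 - μ * Real.log (p : ℕ) : ℝ) : ℂ) ^ j * ((p : ℕ) : ℂ) ^ (-s)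

lemma P_term_le {P : Set ℕ} (hP : ∀ n ∈ P, 2 ≤ n) {r x : ℝ} (hrx : r < x) (μ : ℝ) (j : ℕ) :
    ∃ C : ℝ, 0 ≤ C ∧ ∀ p : P, |1 - μ * Real.log (p : ℕ)| ^ j * ((p : ℕ) : ℝ) ^ (-x)
      ≤ C * ((p : ℕ) : ℝ) ^ (-r) := by
  obtain ⟨C, hC, h⟩ := log_pow_bound 1 |μ| (x - r) zero_le_one (abs_nonneg _) (by linarith) j
  refine ⟨C, hC, fun p => ?_⟩
  have hp : (1 : ℝ) ≤ (p : ℕ) := by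
    have := hP p p.2
    exact_mod_cast (by omega : 1 ≤ (p : ℕ))
  have hl := Real.log_nonneg hp
  have h1 : |1 - μ * Real.log (p : ℕ)| ≤ 1 + |μ| * Real.log (p : ℕ) := by
    calc _ ≤ |(1 : ℝ)| + |μ * Real.log (p : ℕ)| := abs_sub _ _
      _ = _ := by rw [abs_mul, abs_of_nonneg hl, abs_one]
  calc _ ≤ (1 + |μ| * Real.log (p : ℕ)) ^ j * ((p : ℕ) : ℝ) ^ (-x) := by gcongr
    _ ≤ (C * ((p : ℕ) : ℝ) ^ (x - r)) * ((p : ℕ) : ℝ) ^ (-x) := by gcongr; exact h _ hp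
    _ = _ := by
      rw [mul_assoc, ← Real.rpow_add (by linarith)]; congr 2; ring

lemma P_summable {P : Set ℕ} (hP : ∀ n ∈ P, 2 ≤ n) {r x : ℝ} (hrx : r < x)
    (hr : Summable (fun n : P => ((n : ℕ) : ℝ) ^ (-r))) (μ : ℝ) (j : ℕ) :
    Summable (fun p : P => |1 - μ * Real.log (p : ℕ)| ^ j * ((p : ℕ) : ℝ) ^ (-x)) := by
  obtain ⟨C, hC, h⟩ := P_term_le hP hrx μ j
  exact Summable.of_nonneg_of_le (fun p => by positivity) h (hr.mul_left C)

lemma P_term_norm {P : Set ℕ} (hP : ∀ n ∈ P, 2 ≤ n) (μ : ℝ) (j : ℕ) (s : ℂ) (p : P) :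
    ‖((1 - μ * Real.log (p : ℕ) : ℝ) : ℂ) ^ j * ((p : ℕ) : ℂ) ^ (-s)‖
      = |1 - μ * Real.log (p : ℕ)| ^ j * ((p : ℕ) : ℝ) ^ (-s.re) := by
  have := hP p p.2
  rw [norm_mul, norm_pow, Complex.norm_real, Real.norm_eq_abs,
    Complex.norm_natCast_cpow_of_pos (by omega), Complex.neg_re]

lemma P_term_diff {P : Set ℕ} (hP : ∀ n ∈ P, 2 ≤ n) (μ : ℝ) (j : ℕ) (p : P) (s : ℂ) :
    HasDerivAt (fun s : ℂ => ((1 - μ * Real.log (p : ℕ) : ℝ) : ℂ) ^ j * ((p : ℕ) : ℂ) ^ (-s))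
      (((1 - μ * Real.log (p : ℕ) : ℝ) : ℂ) ^ j *
        (((p : ℕ) : ℂ) ^ (-s) * Complex.log (p : ℕ) * (-1))) s := by
  have := hP p p.2
  have h0 : ((p : ℕ) : ℂ) ≠ 0 := by exact_mod_cast (by omega : (p : ℕ) ≠ 0)
  exact ((hasDerivAt_neg s).const_cpow (Or.inl h0)).const_mul _

lemma Q_analytic {P : Set ℕ} (hP : ∀ n ∈ P, 2 ≤ n) {r : ℝ}
    (hr : Summable (fun n : P => ((n : ℕ) : ℝ) ^ (-r))) (μ : ℝ) (j : ℕ) {s : ℂ} (hs : r < s.re) :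
    AnalyticAt ℂ (Qser P μ j) s ∧
    HasSum (fun p : P => ((1 - μ * Real.log (p : ℕ) : ℝ) : ℂ) ^ j *
        (((p : ℕ) : ℂ) ^ (-s) * Complex.log (p : ℕ) * (-1))) (deriv (Qser P μ j) s) := by
  obtain ⟨x, hrx, hxs⟩ := exists_between hs
  have hU : IsOpen {w : ℂ | x < w.re} := isOpen_lt continuous_const Complex.continuous_re
  have hb : ∀ (p : P), ∀ w ∈ {w : ℂ | x < w.re},
      ‖((1 - μ * Real.log (p : ℕ) : ℝ) : ℂ) ^ j * ((p : ℕ) : ℂ) ^ (-w)‖ ≤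
        |1 - μ * Real.log (p : ℕ)| ^ j * ((p : ℕ) : ℝ) ^ (-x) := by
    intro p w hw
    rw [P_term_norm hP]
    have hp : (1 : ℝ) ≤ (p : ℕ) := by
      have := hP p p.2
      exact_mod_cast (by omega : 1 ≤ (p : ℕ))
    have : x < w.re := hw
    gcongr
  have hd : ∀ p : P, DifferentiableOn ℂ
      (fun s : ℂ => ((1 - μ * Real.log (p : ℕ) : ℝ) : ℂ) ^ j * ((p : ℕ) : ℂ) ^ (-s))
      {w : ℂ | x < w.re} := fun p w _ =>
    (P_term_diff hP μ j p w).differentiableAt.differentiableWithinAt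
  constructor
  · exact (Complex.differentiableOn_tsum_of_summable_norm (P_summable hP hrx hr μ j) hd hU
      hb).analyticAt (hU.mem_nhds hxs)
  · have := Complex.hasSum_deriv_of_summable_norm (P_summable hP hrx hr μ j) hd hU hb
      (z := s) hxs
    simp only [(P_term_diff hP μ j _ s).deriv] at this
    exact this

/-! ### Nonvanishing on the line -/

lemma nonper_aux {P : Set ℕ} (hP : ∀ n ∈ P, 2 ≤ n) (hP2 : P.Nontrivial) (c : ℝ)
    (h : ∀ n ∈ P, ∃ z : ℤ, Real.log n = z * c) :
    ∃ d : ℕ, 2 ≤ d ∧ P ⊆ {n : ℕ | ∃ k : ℕ, 1 ≤ k ∧ n = d ^ k} := by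
  let H : AddSubgroup ℤ :=
    { carrier := {z : ℤ | ∃ q : ℚ, Real.exp (z * c) = q}
      zero_mem' := ⟨1, by simp⟩
      add_mem' := by
        rintro a b ⟨q, hq⟩ ⟨q', hq'⟩
        exact ⟨q * q', by push_cast; rw [add_mul, Real.exp_add, hq, hq']⟩
      neg_mem' := by
        rintro a ⟨q, hq⟩
        exact ⟨q⁻¹, by push_cast; rw [neg_mul, Real.exp_neg, hq]⟩ }
  obtain ⟨a, ha⟩ := Int.subgroup_cyclic H
  have hmem : ∀ z : ℤ, z ∈ H ↔ ∃ k : ℤ, k * a = z := by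
    intro z
    rw [ha, AddSubgroup.mem_closure_singleton]; simp
  -- choose the sign of the generator
  obtain ⟨a, hac, hmem⟩ : ∃ a : ℤ, 0 ≤ a * c ∧ ∀ z : ℤ, z ∈ H ↔ ∃ k : ℤ, k * a = z := by
    rcases le_total 0 ((a : ℝ) * c) with h0 | h0
    · exact ⟨a, h0, hmem⟩
    · refine ⟨-a, by push_cast; linarith, fun z => (hmem z).trans ?_⟩
      constructor
      · rintro ⟨k, hk⟩; exact ⟨-k, by linarith⟩
      · rintro ⟨k, hk⟩; exact ⟨-k, by linarith⟩
  obtain ⟨q, hq⟩ : a ∈ H := (hmem a).2 ⟨1, by simp⟩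
  have key : ∀ n ∈ P, ∃ k : ℕ, 1 ≤ k ∧ (n : ℚ) = q ^ k := by
    intro n hn
    have hn2 := hP n hn
    have hn0 : (0 : ℝ) < n := by exact_mod_cast (by omega : 0 < n)
    have hl : 0 < Real.log n := Real.log_pos (by exact_mod_cast (by omega : 1 < n))
    obtain ⟨z, hz⟩ := h n hn
    have hzH : z ∈ H := ⟨n, by rw [← hz, Real.exp_log hn0]; simp⟩
    obtain ⟨k, hk⟩ := (hmem z).1 hzH
    have hk' : (k : ℝ) * (a * c) = Real.log n := by rw [hz, ← hk]; push_cast; ring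
    have hkpos : 0 < k := by
      by_contra hneg
      have : (k : ℝ) ≤ 0 := by exact_mod_cast not_lt.1 hneg
      nlinarith
    lift k to ℕ using hkpos.le
    refine ⟨k, by exact_mod_cast hkpos, ?_⟩
    have : (n : ℝ) = (q : ℝ) ^ k := by
      rw [← hq, ← Real.exp_nat_mul]
      rw [← Real.exp_log hn0]
      congr 1
      rw [← hk']; push_cast; ring
    exact_mod_cast this
  have hq0 : 0 < q := by
    have := Real.exp_pos (a * c)
    rw [hq] at this
    exact_mod_cast this
  obtain ⟨n, hn⟩ := hP2.nonempty
  obtain ⟨k, hk1, hk⟩ := key n hn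
  have hden : q.den = 1 := by
    have h1 : (q ^ k).den = 1 := by rw [← hk]; simp
    rw [Rat.den_pow] at h1
    exact (Nat.pow_eq_one.1 h1).resolve_right (by omega)
  have hqd : q = (q.num.toNat : ℚ) := by
    have h1 : q = q.num := by
      conv_lhs => rw [← Rat.num_div_den q, hden]
      simp
    have h2 : ((q.num.toNat : ℤ)) = q.num := Int.toNat_of_nonneg (Rat.num_pos.2 hq0).le
    conv_lhs => rw [h1, ← h2]
    exact Int.cast_natCast _
  generalize q.num.toNat = d at hqd
  subst hqd
  refine ⟨d, ?_, fun n hn => ?_⟩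
  · have hn' : n = d ^ k := by exact_mod_cast hk
    have h2 := hP n hn
    by_contra hd
    have : d ^ k ≤ 1 ^ k := Nat.pow_le_pow_left (by omega) k
    simp at this
    omega
  · obtain ⟨k, hk1, hk⟩ := key n hn
    exact ⟨k, hk1, by exact_mod_cast hk⟩

lemma Q0_ne_one {P : Set ℕ} (hP : ∀ n ∈ P, 2 ≤ n) (hP2 : P.Nontrivial) {r ρ : ℝ}
    (hr : Summable (fun n : P => ((n : ℕ) : ℝ) ^ (-r))) (hrρ : r < ρ) (hρ1 : Pval P ρ = 1)
    (hnp : ∀ d : ℕ, 2 ≤ d → ¬ P ⊆ {n : ℕ | ∃ k : ℕ, 1 ≤ k ∧ n = d ^ k}) (μ : ℝ)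
    {s : ℂ} (hs : ρ ≤ s.re) (hsρ : s ≠ (ρ : ℂ)) : Qser P μ 0 s ≠ 1 := by
  intro h1
  have hsum : Summable (fun p : P => ((p : ℕ) : ℂ) ^ (-s)) := by
    have := (P_summable hP (hrρ.trans_le hs) hr μ 0)
    refine Summable.of_norm ?_
    convert this using 2 with p
    have := P_term_norm hP μ 0 s p
    simpa using this
  have hsumρ : Summable (fun p : P => ((p : ℕ) : ℝ) ^ (-ρ)) := by
    simpa using P_summable hP hrρ hr μ 0
  have h1' : ∑' p : P, ((p : ℕ) : ℂ) ^ (-s) = 1 := by simpa [Qser] using h1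
  have hre : ∑' p : P, (((p : ℕ) : ℂ) ^ (-s)).re = 1 := by
    rw [← Complex.re_tsum hsum, h1']; simp
  have hresum : Summable (fun p : P => (((p : ℕ) : ℂ) ^ (-s)).re) :=
    (Complex.hasSum_re hsum.hasSum).summable
  have hnorm : ∀ p : P, ‖((p : ℕ) : ℂ) ^ (-s)‖ = ((p : ℕ) : ℝ) ^ (-s.re) := by
    intro p
    simpa using P_term_norm hP μ 0 s p
  have hp1 : ∀ p : P, (1 : ℝ) < (p : ℕ) := fun p => by
    have := hP p p.2
    exact_mod_cast (by omega : 1 < (p : ℕ))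
  have hle : ∀ p : P, ((p : ℕ) : ℝ) ^ (-s.re) ≤ ((p : ℕ) : ℝ) ^ (-ρ) := by
    intro p
    exact Real.rpow_le_rpow_of_exponent_le (hp1 p).le (by linarith)
  have hle2 : ∀ p : P, (((p : ℕ) : ℂ) ^ (-s)).re ≤ ((p : ℕ) : ℝ) ^ (-s.re) := by
    intro p
    rw [← hnorm]; exact Complex.re_le_norm _
  have heq : ∀ p : P, (((p : ℕ) : ℂ) ^ (-s)).re = ((p : ℕ) : ℝ) ^ (-ρ) := by
    intro p
    by_contra hne
    have hlt := lt_of_le_of_ne ((hle2 p).trans (hle p)) hne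
    have := Summable.tsum_lt_tsum (fun q => (hle2 q).trans (hle q)) hlt hresum hsumρ
    rw [hre] at this
    rw [Pval] at hρ1
    linarith
  have hsre : s.re = ρ := by
    obtain ⟨n, hn⟩ := hP2.nonempty
    have h2 : ((n : ℕ) : ℝ) ^ (-s.re) = (n : ℝ) ^ (-ρ) :=
      le_antisymm (hle ⟨n, hn⟩) (by rw [← heq ⟨n, hn⟩]; exact hle2 ⟨n, hn⟩)
    have h3 := Real.rpow_le_rpow_left_iff (hp1 ⟨n, hn⟩) |>.1 h2.ge
    linarith
  have him : s.im ≠ 0 := by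
    intro him
    exact hsρ (Complex.ext (by simpa using hsre) (by simpa using him))
  obtain ⟨d, hd, hPd⟩ := nonper_aux hP hP2 (2 * Real.pi / s.im) (by
    intro n hn
    have hn1 := hp1 ⟨n, hn⟩
    have hn0 : (n : ℂ) ≠ 0 := by
      have := hP n hn
      exact_mod_cast (by omega : n ≠ 0)
    have hz1 := heq ⟨n, hn⟩
    have hz2 := hnorm ⟨n, hn⟩
    simp only at hz1 hz2 hn1
    rw [hsre] at hz2
    have hz : (n : ℂ) ^ (-s) = (n : ℂ) ^ (-(ρ : ℂ)) := by
      have h3 : (n : ℂ) ^ (-s) = ((((n : ℂ) ^ (-s)).re : ℝ) : ℂ) := by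
        have := Complex.re_eq_norm.1 (hz1.trans hz2.symm)
        exact (Complex.eq_re_of_ofReal_le (r := 0) (by simpa using this))
      rw [h3, hz1, Complex.ofReal_cpow (by positivity)]
      simp
    have h4 : (n : ℂ) ^ ((ρ : ℂ) - s) = 1 := by
      rw [sub_eq_add_neg, Complex.cpow_add _ _ hn0, hz, ← Complex.cpow_add _ _ hn0]
      simp
    rw [Complex.cpow_def_of_ne_zero hn0, Complex.exp_eq_one_iff] at h4
    obtain ⟨z, hz⟩ := h4
    refine ⟨-z, ?_⟩
    have h5 := congrArg Complex.im hz
    rw [← Complex.natCast_log] at h5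
    simp [-Complex.natCast_log] at h5
    push_cast
    field_simp
    linarith)
  exact hnp d hd hPd

/-! ### Lists -/

def wt {P : Set ℕ} (l : List P) : ℕ := (l.map (fun p : P => (p : ℕ))).prod

lemma wt_cons {P : Set ℕ} (p : P) (l : List P) : wt (p :: l) = p * wt l := by simp [wt]

lemma wt_nil {P : Set ℕ} : wt ([] : List P) = 1 := by simp [wt]

lemma wt_ge {P : Set ℕ} (hP : ∀ n ∈ P, 2 ≤ n) (l : List P) : 2 ^ l.length ≤ wt l := by
  induction l with
  | nil => simp [wt]
  | cons p l ih =>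
    rw [wt_cons, List.length_cons, pow_succ, mul_comm]
    exact Nat.mul_le_mul (hP p p.2) ih

lemma wt_pos {P : Set ℕ} (hP : ∀ n ∈ P, 2 ≤ n) (l : List P) : 0 < wt l :=
  lt_of_lt_of_le (by positivity) (wt_ge hP l)

def listEquiv (α : Type*) : Unit ⊕ (α × List α) ≃ List α where
  toFun := fun x => match x with
    | Sum.inl _ => []
    | Sum.inr (p, l) => p :: l
  invFun := fun l => match l with
    | [] => Sum.inl ()
    | p :: l => Sum.inr (p, l)
  left_inv := by rintro (_ | ⟨p, l⟩) <;> rfl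
  right_inv := by rintro (_ | ⟨p, l⟩) <;> rfl

lemma list_ennreal {α : Type*} (f : α → ℝ≥0∞) (q : ℝ≥0∞) (hq : ∑' a, f a ≤ q) (hq1 : q < 1)
    (N : ℕ) :
    ∑' l : List α, (if l.length < N then (l.map f).prod else 0) ≤ (1 - q)⁻¹ := by
  induction N with
  | zero => simp
  | succ N ih =>
    rw [← (listEquiv α).tsum_eq, Summable.tsum_sum ENNReal.summable ENNReal.summable,
      ENNReal.tsum_prod']
    have : ∀ (a : α) (l : List α), (if (listEquiv α (Sum.inr (a, l))).length < N + 1 then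
        ((listEquiv α (Sum.inr (a, l))).map f).prod else 0)
        = f a * (if l.length < N then (l.map f).prod else 0) := by
      intro a l
      simp [listEquiv]
    simp only [this, ENNReal.tsum_mul_left, ENNReal.tsum_mul_right]
    have h1 : ∑' i : Unit, (if (listEquiv α (Sum.inl i)).length < N + 1 then
        ((listEquiv α (Sum.inl i)).map f).prod else 0) = (1 : ℝ≥0∞) := by
      simp [listEquiv]
    rw [h1]
    have hne : (1 - q) ≠ 0 := (tsub_pos_of_lt hq1).ne'
    have hnt : (1 - q) ≠ ⊤ := ENNReal.sub_ne_top ENNReal.one_ne_top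
    calc _ ≤ 1 + q * (1 - q)⁻¹ := by gcongr
      _ = (1 - q) * (1 - q)⁻¹ + q * (1 - q)⁻¹ := by rw [ENNReal.mul_inv_cancel hne hnt]
      _ = (1 - q)⁻¹ := by rw [← add_mul, tsub_add_cancel_of_le hq1.le, one_mul]

lemma list_summable {α : Type*} (f : α → ℝ) (hf : ∀ a, 0 ≤ f a) (hs : Summable f)
    (h1 : ∑' a, f a < 1) : Summable (fun l : List α => (l.map f).prod) := by
  have hnn : ∀ l : List α, 0 ≤ (l.map f).prod := fun l => by
    apply List.prod_nonneg
    intro a ha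
    obtain ⟨b, -, rfl⟩ := List.mem_map.1 ha
    exact hf b
  have hof : ∀ l : List α, ENNReal.ofReal (l.map f).prod
      = (l.map (fun a => ENNReal.ofReal (f a))).prod := by
    intro l
    induction l with
    | nil => simp
    | cons a l ih => simp [ENNReal.ofReal_mul (hf a), ih]
  set q := ENNReal.ofReal (∑' a, f a) with hqdef
  have hq : ∑' a, ENNReal.ofReal (f a) ≤ q := (ENNReal.ofReal_tsum_of_nonneg hf hs).ge
  have hq1 : q < 1 := by
    rw [hqdef, ENNReal.ofReal_lt_one]; exact h1
  refine summable_of_sum_le (c := ((1 - q)⁻¹).toReal) hnn (fun u => ?_)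
  have hfin : (1 - q)⁻¹ ≠ ⊤ := ENNReal.inv_ne_top.2 (tsub_pos_of_lt hq1).ne'
  rw [← ENNReal.ofReal_le_iff_le_toReal hfin, ENNReal.ofReal_sum_of_nonneg (fun l _ => hnn l)]
  refine le_trans ?_ (list_ennreal (fun a => ENNReal.ofReal (f a)) q hq hq1
    (u.sup List.length + 1))
  refine le_trans (Finset.sum_le_sum ?_) (ENNReal.sum_le_tsum u)
  intro l hl
  rw [if_pos (Nat.lt_succ_of_le (Finset.le_sup hl)), hof]

def Lterm (P : Set ℕ) (μ : ℝ) (k : ℕ) (s : ℂ) (l : List P) : ℂ :=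
  (((l.length : ℝ) - μ * Real.log (wt l) : ℝ) : ℂ) ^ k * (wt l : ℂ) ^ (-s)

lemma wt_rpow {P : Set ℕ} (x : ℝ) (l : List P) :
    (wt l : ℝ) ^ (-x) = (l.map (fun p : P => ((p : ℕ) : ℝ) ^ (-x))).prod := by
  induction l with
  | nil => simp [wt]
  | cons p l ih =>
    rw [wt_cons, List.map_cons, List.prod_cons, ← ih]
    push_cast
    rw [Real.mul_rpow (by positivity) (by positivity)]

lemma Pval_lt_one {P : Set ℕ} (hP : ∀ n ∈ P, 2 ≤ n) (hP2 : P.Nontrivial) {r ρ x : ℝ}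
    (hr : Summable (fun n : P => ((n : ℕ) : ℝ) ^ (-r))) (hrρ : r < ρ) (hρ1 : Pval P ρ = 1)
    (hx : ρ < x) : ∑' p : P, ((p : ℕ) : ℝ) ^ (-x) < 1 := by
  have hsum : ∀ y, r < y → Summable (fun p : P => ((p : ℕ) : ℝ) ^ (-y)) := fun y hy => by
    simpa using P_summable hP hy hr 0 0
  have hp1 : ∀ p : P, (1 : ℝ) < (p : ℕ) := fun p => by
    have := hP p p.2
    exact_mod_cast (by omega : 1 < (p : ℕ))
  obtain ⟨n, hn⟩ := hP2.nonempty
  rw [← hρ1, Pval]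
  refine Summable.tsum_lt_tsum (i := ⟨n, hn⟩) (fun p => ?_) ?_ (hsum x (hrρ.trans hx))
    (hsum ρ hrρ)
  · exact Real.rpow_le_rpow_of_exponent_le (hp1 p).le (by linarith)
  · exact Real.rpow_lt_rpow_of_exponent_lt (hp1 _) (by linarith)

lemma Lterm_summable {P : Set ℕ} (hP : ∀ n ∈ P, 2 ≤ n) (hP2 : P.Nontrivial) {r ρ : ℝ}
    (hr : Summable (fun n : P => ((n : ℕ) : ℝ) ^ (-r))) (hrρ : r < ρ) (hρ1 : Pval P ρ = 1)
    (μ : ℝ) (k : ℕ) {s : ℂ} (hs : ρ < s.re) : Summable (fun l => ‖Lterm P μ k s l‖) := by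
  obtain ⟨x, hx, hxs⟩ := exists_between hs
  have h1 : Summable (fun l : List P => (wt l : ℝ) ^ (-x)) := by
    simp only [wt_rpow]
    refine list_summable _ (fun p => by positivity) ?_ (Pval_lt_one hP hP2 hr hrρ hρ1 hx)
    simpa using P_summable hP (hrρ.trans hx) hr 0 0
  obtain ⟨C, hC, h⟩ := log_pow_bound 0 (1 / Real.log 2 + |μ|) (s.re - x) le_rfl
    (by have := Real.log_pos one_lt_two; positivity) (by linarith) k
  refine Summable.of_nonneg_of_le (fun l => norm_nonneg _) (fun l => ?_) (h1.mul_left C)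
  have hw := wt_pos hP l
  have hw1 : (1 : ℝ) ≤ wt l := by exact_mod_cast hw
  have hl := Real.log_nonneg hw1
  have hl2 := Real.log_pos one_lt_two
  have hlen : (l.length : ℝ) ≤ 1 / Real.log 2 * Real.log (wt l) := by
    have h2 : ((2 : ℝ) ^ l.length) ≤ wt l := by exact_mod_cast wt_ge hP l
    have h3 := Real.log_le_log (by positivity) h2
    rw [Real.log_pow] at h3
    rw [one_div, inv_mul_eq_div, le_div_iff₀ hl2]
    exact h3
  rw [Lterm, norm_mul, norm_pow, Complex.norm_real, Real.norm_eq_abs,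
    Complex.norm_natCast_cpow_of_pos hw, Complex.neg_re]
  have habs : |(l.length : ℝ) - μ * Real.log (wt l)| ≤
      0 + (1 / Real.log 2 + |μ|) * Real.log (wt l) := by
    calc _ ≤ |(l.length : ℝ)| + |μ * Real.log (wt l)| := abs_sub _ _
      _ = (l.length : ℝ) + |μ| * Real.log (wt l) := by
        rw [abs_mul, abs_of_nonneg hl, Nat.abs_cast]
      _ ≤ _ := by rw [add_mul, zero_add]; gcongr
  calc _ ≤ (0 + (1 / Real.log 2 + |μ|) * Real.log (wt l)) ^ k * (wt l : ℝ) ^ (-s.re) := by gcongr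
    _ ≤ (C * (wt l : ℝ) ^ (s.re - x)) * (wt l : ℝ) ^ (-s.re) := by gcongr; exact h _ hw1
    _ = _ := by
      rw [mul_assoc, ← Real.rpow_add (by linarith)]; congr 2; ring

lemma Lterm_cons {P : Set ℕ} (hP : ∀ n ∈ P, 2 ≤ n) (μ : ℝ) (k : ℕ) (s : ℂ) (p : P) (l : List P) :
    Lterm P μ k s (p :: l) = ∑ j ∈ Finset.range (k + 1), (k.choose j : ℂ) *
      ((((1 - μ * Real.log (p : ℕ) : ℝ) : ℂ) ^ (k - j) * ((p : ℕ) : ℂ) ^ (-s)) *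
        Lterm P μ j s l) := by
  have hp := hP p p.2
  have hw := wt_pos hP l
  have e1 : (((p :: l).length : ℝ) - μ * Real.log (wt (p :: l))) =
      ((l.length : ℝ) - μ * Real.log (wt l)) + (1 - μ * Real.log (p : ℕ)) := by
    rw [wt_cons, List.length_cons]
    push_cast
    rw [Real.log_mul (by exact_mod_cast (by omega : (p : ℕ) ≠ 0)) (by exact_mod_cast hw.ne')]
    ring
  rw [Lterm, e1, Complex.ofReal_add, add_pow, wt_cons, Nat.cast_mul,
    Complex.natCast_mul_natCast_cpow, Finset.sum_mul]
  refine Finset.sum_congr rfl fun j _ => ?_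
  rw [Lterm]; ring

lemma L_rec {P : Set ℕ} (hP : ∀ n ∈ P, 2 ≤ n) (hP2 : P.Nontrivial) {r ρ : ℝ}
    (hr : Summable (fun n : P => ((n : ℕ) : ℝ) ^ (-r))) (hrρ : r < ρ) (hρ1 : Pval P ρ = 1)
    (μ : ℝ) (k : ℕ) {s : ℂ} (hs : ρ < s.re) :
    ∑' l, Lterm P μ k s l = (if k = 0 then 1 else 0) +
      ∑ j ∈ Finset.range (k + 1), (k.choose j : ℂ) *
        (Qser P μ (k - j) s * ∑' l, Lterm P μ j s l) := by
  have hL := fun k => Lterm_summable hP hP2 hr hrρ hρ1 μ k hs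
  have hQ : ∀ j, Summable (fun p : P =>
      ‖((1 - μ * Real.log (p : ℕ) : ℝ) : ℂ) ^ j * ((p : ℕ) : ℂ) ^ (-s)‖) := fun j => by
    simp only [P_term_norm hP]
    exact P_summable hP (hrρ.trans hs) hr μ j
  have hsum : Summable (fun x => Lterm P μ k s (listEquiv P x)) :=
    (listEquiv P).summable_iff.2 (hL k).of_norm
  rw [← (listEquiv P).tsum_eq, Summable.tsum_sum (hsum.comp_injective Sum.inl_injective)
    (hsum.comp_injective Sum.inr_injective)]
  congr 1
  · simp only [listEquiv, Equiv.coe_fn_mk, tsum_fintype, Finset.univ_unique, Finset.sum_singleton,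
      Lterm, wt_nil]
    simp [zero_pow_eq]
  · have : ∀ x : P × List P, Lterm P μ k s (listEquiv P (Sum.inr x)) =
        ∑ j ∈ Finset.range (k + 1), (k.choose j : ℂ) *
      ((((1 - μ * Real.log (x.1 : ℕ) : ℝ) : ℂ) ^ (k - j) * ((x.1 : ℕ) : ℂ) ^ (-s)) *
        Lterm P μ j s x.2) := fun x => Lterm_cons hP μ k s x.1 x.2
    simp only [this]
    rw [Summable.tsum_finsetSum]
    · refine Finset.sum_congr rfl fun j _ => ?_
      rw [tsum_mul_left, Qser, tsum_mul_tsum_of_summable_norm (hQ (k - j)) (hL j)]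
    · intro j _
      exact (summable_mul_of_summable_norm (hQ (k - j)) (hL j)).mul_left _

lemma card_fiber {P : Set ℕ} (n m : ℕ) :
    Nat.card ((fun l : List P => (wt l, l.length)) ⁻¹' {(n, m)}) = af P m n := by
  rw [af]
  refine Nat.card_congr ?_
  refine
    { toFun := fun l => ⟨fun i => ((l.1.get (i.cast (Prod.ext_iff.1 l.2).2.symm) : P) : ℕ), ?_, ?_⟩
      invFun := fun t => ⟨List.ofFn (fun i => (⟨t.1 i, t.2.1 i⟩ : P)), ?_⟩
      left_inv := ?_
      right_inv := ?_ }
  · intro i; exact Subtype.coe_prop _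
  · obtain ⟨l, hl⟩ := l
    have h1 : wt l = n := (Prod.ext_iff.1 hl).1
    have h2 : l.length = m := (Prod.ext_iff.1 hl).2
    subst h1 h2
    simp [wt, ← List.prod_ofFn]
  · simp only [Set.mem_preimage, Set.mem_singleton_iff, Prod.mk.injEq, List.length_ofFn, and_true]
    rw [wt, List.map_ofFn, List.prod_ofFn]
    exact t.2.2
  · rintro ⟨l, hl⟩
    have h1 : wt l = n := (Prod.ext_iff.1 hl).1
    have h2 : l.length = m := (Prod.ext_iff.1 hl).2
    subst h1 h2
    simp
  · rintro ⟨t, ht⟩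
    simp

lemma Mser_eq {P : Set ℕ} (hP : ∀ n ∈ P, 2 ≤ n) (hP2 : P.Nontrivial) {r ρ : ℝ}
    (hr : Summable (fun n : P => ((n : ℕ) : ℝ) ^ (-r))) (hrρ : r < ρ) (hρ1 : Pval P ρ = 1)
    (μ : ℝ) (k : ℕ) {s : ℂ} (hs : ρ < s.re) :
    Mser P μ k s = ∑' l, Lterm P μ k s l := by
  have h := ((Lterm_summable hP hP2 hr hrρ hρ1 μ k hs).of_norm.hasSum).tsum_fiberwise
    (fun l : List P => (wt l, l.length))
  have e : ∀ c : ℕ × ℕ, ∑' b : ((fun l : List P => (wt l, l.length)) ⁻¹' {c}), Lterm P μ k s b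
      = (((af P c.2 c.1 : ℝ) * ((c.2 : ℝ) - μ * Real.log c.1) ^ k : ℝ) : ℂ) *
        (c.1 : ℂ) ^ (-s) := by
    rintro ⟨n, m⟩
    rw [← card_fiber]
    have : ∀ b : ((fun l : List P => (wt l, l.length)) ⁻¹' {(n, m)}), Lterm P μ k s b =
        (((m : ℝ) - μ * Real.log n : ℝ) : ℂ) ^ k * (n : ℂ) ^ (-s) := by
      rintro ⟨l, hl⟩
      obtain ⟨rfl, rfl⟩ := Prod.ext_iff.1 hl
      rfl
    simp only [this, tsum_const, nsmul_eq_mul]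
    push_cast
    ring
  simp only [e] at h
  rw [← h.tsum_eq, h.summable.tsum_prod, Mser]
  refine tsum_congr fun n => ?_
  simp only
  rw [tsum_mul_right, bCoef, Complex.ofReal_tsum]

/-! ### The analytic continuation -/

def Gser (P : Set ℕ) (μ : ℝ) (k : ℕ) (s : ℂ) : ℂ :=
  ((if k = 0 then 1 else 0) + ∑ j : Fin k, (k.choose j : ℂ) *
    (Qser P μ (k - j) s * Gser P μ j s)) / (1 - Qser P μ 0 s)
termination_by k
decreasing_by exact j.2

lemma Gser_eq (P : Set ℕ) (μ : ℝ) (k : ℕ) (s : ℂ) :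
    Gser P μ k s = ((if k = 0 then 1 else 0) + ∑ j ∈ Finset.range k, (k.choose j : ℂ) *
    (Qser P μ (k - j) s * Gser P μ j s)) / (1 - Qser P μ 0 s) := by
  rw [Gser, Finset.sum_range]

lemma Gser_analytic {P : Set ℕ} {μ : ℝ} {s : ℂ} (hQ : ∀ j, AnalyticAt ℂ (Qser P μ j) s)
    (h1 : Qser P μ 0 s ≠ 1) (k : ℕ) : AnalyticAt ℂ (Gser P μ k) s := by
  induction k using Nat.strong_induction_on with
  | _ k ih =>
    have : Gser P μ k = fun s => ((if k = 0 then 1 else 0) + ∑ j ∈ Finset.range k,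
        (k.choose j : ℂ) * (Qser P μ (k - j) s * Gser P μ j s)) / (1 - Qser P μ 0 s) :=
      funext (Gser_eq P μ k)
    rw [this]
    refine AnalyticAt.div (analyticAt_const.add ?_) (analyticAt_const.sub (hQ 0))
      (sub_ne_zero.2 h1.symm)
    refine Finset.analyticAt_fun_sum _ fun j hj => ?_
    exact analyticAt_const.mul ((hQ _).mul (ih j (Finset.mem_range.1 hj)))

lemma dslope_analytic {f : ℂ → ℂ} {z : ℂ} (hf : AnalyticAt ℂ f z) :
    AnalyticAt ℂ (dslope f z) z := by
  obtain ⟨p, hp⟩ := hf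
  exact ⟨_, hp.has_fpower_series_dslope_fslope⟩

lemma Gser_pole {P : Set ℕ} {μ σsq : ℝ} {z : ℂ} (hQ : ∀ j, AnalyticAt ℂ (Qser P μ j) z)
    (hμ : μ ≠ 0) (h0 : Qser P μ 0 z = 1) (hd : deriv (Qser P μ 0) z = -(1 / (μ : ℂ)))
    (h1 : Qser P μ 1 z = 0) (h2 : Qser P μ 2 z = (σsq : ℂ) / μ) (k : ℕ) :
    ∃ h : ℂ → ℂ, AnalyticAt ℂ h z ∧
      (∀ᶠ s in nhdsWithin z {z}ᶜ, Gser P μ k s * (s - z) ^ (k / 2 + 1) = h s) ∧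
      (Even k → h z = (μ : ℂ) * ((σsq / 2 : ℝ) : ℂ) ^ (k / 2) * (Nat.factorial k : ℂ)) := by
  have hμc : (μ : ℂ) ≠ 0 := by exact_mod_cast hμ
  set u : ℂ → ℂ := fun s => - dslope (Qser P μ 0) z s with hu
  have hua : AnalyticAt ℂ u z := (dslope_analytic (hQ 0)).neg
  have huz : u z = 1 / μ := by simp [hu, dslope_same, hd]
  have hune : u z ≠ 0 := by rw [huz]; exact one_div_ne_zero hμc
  have hus : ∀ s, 1 - Qser P μ 0 s = (s - z) * u s := by
    intro s
    have := sub_smul_dslope (Qser P μ 0) z s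
    rw [smul_eq_mul, h0] at this
    simp only [hu]
    linear_combination this
  set v : ℂ → ℂ := dslope (Qser P μ 1) z with hv
  have hva : AnalyticAt ℂ v z := dslope_analytic (hQ 1)
  have hvs : ∀ s, Qser P μ 1 s = (s - z) * v s := by
    intro s
    have := sub_smul_dslope (Qser P μ 1) z s
    rw [smul_eq_mul, h1] at this
    linear_combination -this
  have hev : ∀ᶠ s in nhdsWithin z {z}ᶜ, u s ≠ 0 :=
    (hua.continuousAt.eventually_ne hune).filter_mono nhdsWithin_le_nhds
  have hne : ∀ᶠ s in nhdsWithin z {z}ᶜ, s - z ≠ 0 := by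
    filter_upwards [self_mem_nhdsWithin] with s hs
    exact sub_ne_zero.2 hs
  induction k using Nat.strong_induction_on with
  | _ k ih =>
    have key : ∀ j : ℕ, ∃ t : ℂ → ℂ, j < k → (AnalyticAt ℂ t z ∧
        (∀ᶠ s in nhdsWithin z {z}ᶜ,
          Qser P μ (k - j) s * Gser P μ j s * (s - z) ^ (k / 2) = t s) ∧
        (Even k → t z = if j + 2 = k then
          (σsq : ℂ) / μ * ((μ : ℂ) * ((σsq / 2 : ℝ) : ℂ) ^ (j / 2) * (Nat.factorial j : ℂ))
          else 0)) := by
      intro j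
      by_cases hj : j < k
      swap
      · exact ⟨0, fun h => absurd h hj⟩
      obtain ⟨h, ha, he, hz⟩ := ih j hj
      by_cases hj1 : j + 1 = k
      · refine ⟨fun s => v s * h s * (s - z) ^ (k / 2 - j / 2), fun _ => ⟨?_, ?_, ?_⟩⟩
        · exact (hva.mul ha).mul ((analyticAt_id.sub analyticAt_const).pow _)
        · filter_upwards [he] with s hs
          rw [← hs, show k - j = 1 by omega, hvs]
          have : (s - z) * (s - z) ^ (k / 2) =
              (s - z) ^ (j / 2 + 1) * (s - z) ^ (k / 2 - j / 2) := by
            rw [← pow_succ', ← pow_add]; congr 1; omega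
          linear_combination v s * Gser P μ j s * this
        · intro hk
          obtain ⟨i, rfl⟩ := hk
          rw [if_neg (by omega), show (i + i) / 2 - j / 2 = 1 by omega]
          simp
      · refine ⟨fun s => Qser P μ (k - j) s * h s * (s - z) ^ (k / 2 - j / 2 - 1),
          fun _ => ⟨?_, ?_, ?_⟩⟩
        · exact ((hQ _).mul ha).mul ((analyticAt_id.sub analyticAt_const).pow _)
        · filter_upwards [he] with s hs
          rw [← hs]
          have : (s - z) ^ (k / 2) =
              (s - z) ^ (j / 2 + 1) * (s - z) ^ (k / 2 - j / 2 - 1) := by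
            rw [← pow_add]; congr 1; omega
          rw [this]; ring
        · intro hk
          have hk' := hk
          obtain ⟨i, hi⟩ := hk
          by_cases hj2 : j + 2 = k
          · simp only
            rw [if_pos hj2, show k / 2 - j / 2 - 1 = 0 by omega, show k - j = 2 by omega, h2,
              hz ⟨i - 1, by omega⟩, pow_zero, mul_one]
          · rw [if_neg hj2]
            obtain ⟨e, he⟩ : ∃ e, k / 2 - j / 2 - 1 = e + 1 :=
              ⟨k / 2 - j / 2 - 2, by omega⟩
            simp [he]
    choose t ht using key
    refine ⟨fun s => ((if k = 0 then 1 else 0) + ∑ j ∈ Finset.range k, (k.choose j : ℂ) * t j s)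
      / u s, ?_, ?_, ?_⟩
    · refine AnalyticAt.div (analyticAt_const.add ?_) hua hune
      refine Finset.analyticAt_fun_sum _ fun j hj => ?_
      exact analyticAt_const.mul (ht j (Finset.mem_range.1 hj)).1
    · have hall : ∀ᶠ s in nhdsWithin z {z}ᶜ, ∀ j ∈ Finset.range k,
          Qser P μ (k - j) s * Gser P μ j s * (s - z) ^ (k / 2) = t j s :=
        (Finset.eventually_all _).2 fun j hj => (ht j (Finset.mem_range.1 hj)).2.1
      filter_upwards [hall, hev, hne] with s hs hus0 hsz
      rw [Gser_eq, hus]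
      have : ∑ j ∈ Finset.range k, (k.choose j : ℂ) * t j s =
          (∑ j ∈ Finset.range k, (k.choose j : ℂ) * (Qser P μ (k - j) s * Gser P μ j s)) *
            (s - z) ^ (k / 2) := by
        rw [Finset.sum_mul]
        refine Finset.sum_congr rfl fun j hj => ?_
        rw [← hs j hj]; ring
      rw [this]
      have h3 : (if k = 0 then (1 : ℂ) else 0) * (s - z) ^ (k / 2) = if k = 0 then 1 else 0 := by
        split_ifs with h
        · simp [h]
        · simp
      generalize (if k = 0 then (1 : ℂ) else 0) = c at h3 ⊢
      rw [div_mul_eq_mul_div, div_eq_div_iff (mul_ne_zero hsz hus0) hus0, pow_succ]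
      linear_combination (s - z) * u s * h3
    · intro hk
      simp only
      rw [huz]
      by_cases hk0 : k = 0
      · subst hk0; simp
      obtain ⟨i, rfl⟩ : ∃ i, k = 2 * i + 2 := by
        obtain ⟨i, hi⟩ := hk
        exact ⟨i - 1, by omega⟩
      have : ∑ j ∈ Finset.range (2 * i + 2), ((2 * i + 2).choose j : ℂ) * t j z =
          ((2 * i + 2).choose (2 * i) : ℂ) * t (2 * i) z := by
        refine Finset.sum_eq_single_of_mem _ (Finset.mem_range.2 (by omega)) fun j hj hne => ?_
        rw [(ht j (Finset.mem_range.1 hj)).2.2 hk, if_neg (by omega), mul_zero]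
      rw [this, (ht (2 * i) (by omega)).2.2 hk, if_pos rfl, if_neg (by omega)]
      rw [show (2 * i + 2) / 2 = i + 1 by omega, show 2 * i / 2 = i by omega]
      have hc : (((2 * i + 2).choose (2 * i) : ℕ) : ℂ) * ((2 * i).factorial : ℂ) * 2
          = ((2 * i + 2).factorial : ℂ) := by
        have := Nat.choose_mul_factorial_mul_factorial (show 2 * i ≤ 2 * i + 2 by omega)
        rw [show 2 * i + 2 - 2 * i = 2 by omega] at this
        simpa using congrArg (Nat.cast (R := ℂ)) this
      rw [← hc]
      push_cast
      field_simp
      ring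

lemma Gser_eq_Mser {P : Set ℕ} (hP : ∀ n ∈ P, 2 ≤ n) (hP2 : P.Nontrivial) {r ρ : ℝ}
    (hr : Summable (fun n : P => ((n : ℕ) : ℝ) ^ (-r))) (hrρ : r < ρ) (hρ1 : Pval P ρ = 1)
    (μ : ℝ) {s : ℂ} (hs : ρ < s.re) (h1 : Qser P μ 0 s ≠ 1) (k : ℕ) :
    Gser P μ k s = Mser P μ k s := by
  rw [Mser_eq hP hP2 hr hrρ hρ1 μ k hs]
  induction k using Nat.strong_induction_on with
  | _ k ih =>
    have := L_rec hP hP2 hr hrρ hρ1 μ k hs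
    rw [Finset.sum_range_succ] at this
    rw [Gser_eq, div_eq_iff (sub_ne_zero.2 h1.symm)]
    rw [Finset.sum_congr rfl fun j hj => by rw [ih j (Finset.mem_range.1 hj)]]
    simp at this
    linear_combination -this

/-- **Analytic continuation and pole structure of `M_k`.** Under the stated assumptions,
including non-periodicity, each `M_k` extends analytically to the closed half-plane
`Re s ≥ ρ` except at `s = ρ`, where it has a pole of order at most `⌊k/2⌋ + 1`; moreover,
for even `k`, `M_k(s) ∼ μ (σ²/2)^{k/2} k! (s - ρ)^{-k/2-1}` as `s → ρ`, `Re s > ρ`. -/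
theorem Mser_pole_structure
    (P : Set ℕ) (hP : ∀ n ∈ P, 2 ≤ n) (hP2 : P.Nontrivial)
    (hκ : 1 < PvalE P (kappa P))
    (ρ : ℝ) (hρ0 : 0 < ρ) (hρκ : kappa P < (ρ : EReal)) (hρ1 : Pval P ρ = 1)
    (μ σsq : ℝ) (hμ : μ = -1 / Pderiv1 P ρ) (hσsq : σsq = μ ^ 3 * Pderiv2 P ρ - μ)
    (hnp : ∀ d : ℕ, 2 ≤ d → ¬ P ⊆ {n : ℕ | ∃ k : ℕ, 1 ≤ k ∧ n = d ^ k}) :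
    ∀ k : ℕ, ∃ g : ℂ → ℂ,
      (∀ s : ℂ, ρ < s.re → g s = Mser P μ k s) ∧
      (∀ s : ℂ, ρ ≤ s.re → s ≠ (ρ : ℂ) → AnalyticAt ℂ g s) ∧
      (∃ h : ℂ → ℂ, AnalyticAt ℂ h (ρ : ℂ) ∧
        ∀ s : ℂ, ρ ≤ s.re → s ≠ (ρ : ℂ) → g s = h s / (s - (ρ : ℂ)) ^ (k / 2 + 1)) ∧
      (Even k →
        Tendsto (fun s : ℂ => Mser P μ k s * (s - (ρ : ℂ)) ^ (k / 2 + 1))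
          (nhdsWithin (ρ : ℂ) {s : ℂ | ρ < s.re})
          (nhds ((μ : ℂ) * ((σsq / 2 : ℝ) : ℂ) ^ (k / 2) * (Nat.factorial k : ℂ)))) := by
  obtain ⟨_, ⟨r, rfl, hr⟩, hrρ'⟩ := sInf_lt_iff.1 hρκ
  have hrρ : r < ρ := by exact_mod_cast hrρ'
  have hp1 : ∀ p : P, (1 : ℝ) < (p : ℕ) := fun p => by
    have := hP p p.2
    exact_mod_cast (by omega : 1 < (p : ℕ))
  have hsum0 : Summable (fun p : P => ((p : ℕ) : ℝ) ^ (-ρ)) := by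
    simpa using P_summable hP hrρ hr 0 0
  have hnn : ∀ p : P, 0 ≤ Real.log (p : ℕ) := fun p => Real.log_nonneg (hp1 p).le
  have hsumj : ∀ j : ℕ, Summable (fun p : P =>
      ((p : ℕ) : ℝ) ^ (-ρ) * Real.log (p : ℕ) ^ j) := by
    intro j
    refine Summable.of_nonneg_of_le (fun p => ?_) (fun p => ?_) (P_summable hP hrρ hr (-1) j)
    · have := hnn p; positivity
    · rw [mul_comm]
      have := hnn p
      have h2 : |1 - (-1) * Real.log (p : ℕ)| = 1 + Real.log (p : ℕ) := by
        rw [abs_of_nonneg (by linarith)]; ring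
      rw [h2]
      gcongr
      linarith
  have hsum1 : Summable (fun p : P => ((p : ℕ) : ℝ) ^ (-ρ) * Real.log (p : ℕ)) := by
    simpa using hsumj 1
  have hsum2 := hsumj 2
  have hD : Pderiv1 P ρ < 0 := by
    rw [Pderiv1, neg_lt_zero]
    obtain ⟨n, hn⟩ := hP2.nonempty
    refine hsum1.tsum_pos (fun p => ?_) ⟨n, hn⟩ ?_
    · have := hnn p; positivity
    · have h1 := hp1 ⟨n, hn⟩
      have := Real.log_pos h1
      have h0 : (0 : ℝ) < n := lt_trans one_pos h1
      positivity
  have hμ0 : μ ≠ 0 := by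
    rw [hμ]; exact div_ne_zero (by norm_num) hD.ne
  have hμD : μ * Pderiv1 P ρ = -1 := by rw [hμ]; field_simp [hD.ne]
  have hcast : ∀ p : P, ((p : ℕ) : ℂ) ^ (-(ρ : ℂ)) = (((p : ℕ) : ℝ) ^ (-ρ) : ℝ) := by
    intro p
    rw [Complex.ofReal_cpow (by positivity)]; simp
  have hQreal : ∀ j, Qser P μ j (ρ : ℂ) =
      ((∑' p : P, (1 - μ * Real.log (p : ℕ)) ^ j * ((p : ℕ) : ℝ) ^ (-ρ) : ℝ) : ℂ) := by
    intro j
    rw [Qser, Complex.ofReal_tsum]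
    refine tsum_congr fun p => ?_
    rw [hcast]; push_cast; rfl
  have hQρ : ∀ j, AnalyticAt ℂ (Qser P μ j) (ρ : ℂ) := fun j =>
    (Q_analytic hP hr μ j (s := (ρ : ℂ)) (by simpa using hrρ)).1
  have hq0 : Qser P μ 0 (ρ : ℂ) = 1 := by
    rw [hQreal]
    simp only [pow_zero, one_mul]
    rw [← Pval, hρ1]; simp
  have hq1 : Qser P μ 1 (ρ : ℂ) = 0 := by
    rw [hQreal]
    have : ∀ p : P, (1 - μ * Real.log (p : ℕ)) ^ 1 * ((p : ℕ) : ℝ) ^ (-ρ) =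
        ((p : ℕ) : ℝ) ^ (-ρ) - μ * (((p : ℕ) : ℝ) ^ (-ρ) * Real.log (p : ℕ)) := fun p => by ring
    simp only [this]
    rw [hsum0.tsum_sub (hsum1.mul_left μ), tsum_mul_left, ← Pval, hρ1]
    rw [Pderiv1] at hμD
    have : (1 : ℝ) - μ * ∑' p : P, ((p : ℕ) : ℝ) ^ (-ρ) * Real.log (p : ℕ) = 0 := by linarith
    rw [this]; simp
  have hq2 : Qser P μ 2 (ρ : ℂ) = (σsq : ℂ) / μ := by
    rw [hQreal]
    have : ∀ p : P, (1 - μ * Real.log (p : ℕ)) ^ 2 * ((p : ℕ) : ℝ) ^ (-ρ) =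
        (((p : ℕ) : ℝ) ^ (-ρ) - (2 * μ) * (((p : ℕ) : ℝ) ^ (-ρ) * Real.log (p : ℕ))) +
          μ ^ 2 * (((p : ℕ) : ℝ) ^ (-ρ) * Real.log (p : ℕ) ^ 2) := fun p => by ring
    simp only [this]
    rw [(hsum0.sub (hsum1.mul_left (2 * μ))).tsum_add (hsum2.mul_left _),
      hsum0.tsum_sub (hsum1.mul_left (2 * μ)), tsum_mul_left, tsum_mul_left, ← Pval, hρ1,
      ← Pderiv2]
    rw [Pderiv1] at hμD
    have : (1 : ℝ) - 2 * μ * ∑' p : P, ((p : ℕ) : ℝ) ^ (-ρ) * Real.log (p : ℕ)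
        + μ ^ 2 * Pderiv2 P ρ = σsq / μ := by
      rw [hσsq]; field_simp; linear_combination 2 * hμD
    rw [this]; simp
  have hqd : deriv (Qser P μ 0) (ρ : ℂ) = -(1 / (μ : ℂ)) := by
    have h := (Q_analytic hP hr μ 0 (s := (ρ : ℂ)) (by simpa using hrρ)).2
    rw [← h.tsum_eq]
    have : ∀ p : P, ((1 - μ * Real.log (p : ℕ) : ℝ) : ℂ) ^ 0 *
        (((p : ℕ) : ℂ) ^ (-(ρ : ℂ)) * Complex.log (p : ℕ) * (-1)) =
        ((-(((p : ℕ) : ℝ) ^ (-ρ) * Real.log (p : ℕ)) : ℝ) : ℂ) := by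
      intro p
      rw [hcast, ← Complex.natCast_log]; push_cast; ring
    simp only [this]
    rw [← Complex.ofReal_tsum, tsum_neg, ← Pderiv1]
    have : Pderiv1 P ρ = -(1 / μ) := by field_simp; linarith
    rw [this]; simp
  intro k
  have hne1 : ∀ s : ℂ, ρ ≤ s.re → s ≠ (ρ : ℂ) → Qser P μ 0 s ≠ 1 := fun s h1 h2 =>
    Q0_ne_one hP hP2 hr hrρ hρ1 hnp μ h1 h2
  have hre : ∀ s : ℂ, ρ < s.re → s ≠ (ρ : ℂ) := by
    rintro s hs rfl
    simp at hs
  have hGM : ∀ s : ℂ, ρ < s.re → Gser P μ k s = Mser P μ k s := fun s hs =>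
    Gser_eq_Mser hP hP2 hr hrρ hρ1 μ hs (hne1 s hs.le (hre s hs)) k
  obtain ⟨h, ha, he, hz⟩ := Gser_pole (σsq := σsq) hQρ hμ0 hq0 hqd hq1 hq2 k
  refine ⟨Gser P μ k, hGM, ?_, ?_, ?_⟩
  · intro s hs hsρ
    exact Gser_analytic (fun j => (Q_analytic hP hr μ j (hrρ.trans_le hs)).1) (hne1 s hs hsρ) k
  · classical
    refine ⟨Function.update (fun s => Gser P μ k s * (s - (ρ : ℂ)) ^ (k / 2 + 1)) (ρ : ℂ) (h ρ),
      ?_, ?_⟩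
    · refine ha.congr ?_
      rw [eventually_nhdsWithin_iff] at he
      filter_upwards [he] with s hs
      by_cases hsρ : s = (ρ : ℂ)
      · subst hsρ; simp
      · rw [Function.update_of_ne hsρ]
        exact (hs hsρ).symm
    · intro s hs hsρ
      rw [Function.update_of_ne hsρ]
      have := sub_ne_zero.2 hsρ
      field_simp
  · intro hk
    rw [← hz hk]
    have hsub : {s : ℂ | ρ < s.re} ⊆ {(ρ : ℂ)}ᶜ := fun s hs => hre s hs
    refine Tendsto.congr' ?_ (ha.continuousAt.tendsto.mono_left nhdsWithin_le_nhds)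
    filter_upwards [he.filter_mono (nhdsWithin_mono _ hsub), self_mem_nhdsWithin] with s hs hs'
    rw [← hs, hGM s hs']
end
end
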